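/- arXiv:2506.01903 — 7 statements merged into one kernel-verified Lean document; each statement's English description precedes it below -/
import Mathlib

section
/- If an (n,m,p)-quantum random access code exists with 1/2 ≤ p ≤ 1, then m ≥ (1 − H(2p(1−p)))·n − log₂(n+1), where H denotes binary entropy with base-2 logarithms. -/
open Matrix BigOperators ComplexOrder

/-- Binary entropy with base-2 logarithms; `Real.logb 2 0 = 0`, so `binEntropy2 0 = binEntropy2 1 = 0`. -/
noncomputable def binEntropy2 (q : ℝ) : ℝ :=
  -q * Real.logb 2 q - (1 - q) * Real.logb 2 (1 - q)

theorem psd_entry {d : Type*} [Fintype d] [DecidableEq d] {A : Matrix d d ℂ} (hA : A.PosSemidef)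
    (i j : d) : Complex.normSq (A i j) ≤ (A i i).re * (A j j).re := by
  have h := (hA.submatrix ![i, j]).det_nonneg
  have h2 := hA.1.apply i j
  have hi := hA.1.apply i i
  have hj := hA.1.apply j j
  have e1 : (A i i).im = 0 := by
    have := congrArg Complex.im hi; simp at this; linarith
  have e2 : (A j j).im = 0 := by
    have := congrArg Complex.im hj; simp at this; linarith
  rw [Matrix.det_fin_two] at h
  simp at h
  have := (Complex.le_def.1 h).1
  rw [← hA.1.apply j i] at this
  simp [e1, e2] at this
  rw [Complex.normSq_apply]
  linarith

theorem psd_diag_re {d : Type*} [Fintype d] [DecidableEq d] {A : Matrix d d ℂ} (hA : A.PosSemidef)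
    (i : d) : 0 ≤ (A i i).re := (Complex.le_def.1 (hA.diag_nonneg (i := i))).1

theorem psd_diag_im {d : Type*} [Fintype d] [DecidableEq d] {A : Matrix d d ℂ} (hA : A.PosSemidef)
    (i : d) : (A i i).im = 0 := ((Complex.le_def.1 (hA.diag_nonneg (i := i))).2).symm

theorem psd_trace_mul_nonneg {d : Type*} [Fintype d] [DecidableEq d] {A B : Matrix d d ℂ}
    (hA : A.PosSemidef) (hB : B.PosSemidef) : 0 ≤ (A * B).trace.re := by
  obtain ⟨C, rfl⟩ : ∃ C : Matrix d d ℂ, A = Cᴴ * C := by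
    open scoped MatrixOrder Matrix.Norms.L2Operator in
    exact CStarAlgebra.nonneg_iff_eq_star_mul_self.1 (Matrix.nonneg_iff_posSemidef.2 hA)
  rw [Matrix.mul_assoc, Matrix.trace_mul_comm]
  exact (Complex.le_def.1 (hB.mul_mul_conjTranspose_same C).trace_nonneg).1

theorem psd_trace_mul_le {d : Type*} [Fintype d] [DecidableEq d] {A B : Matrix d d ℂ}
    (hA : A.PosSemidef) (hB : B.PosSemidef) :
    (A * B).trace.re ≤ A.trace.re * B.trace.re := by
  have key : ∀ i j, (A i j * B j i).re ≤ ((A i i).re * (B j j).re + (A j j).re * (B i i).re) / 2 := by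
    intro i j
    have h1 := psd_entry hA i j
    have h2 := psd_entry hB j i
    have h0 : (A i j * B j i).re ^ 2 ≤ Complex.normSq (A i j) * Complex.normSq (B j i) := by
      rw [← Complex.normSq_mul, Complex.normSq_apply (A i j * B j i)]
      nlinarith [mul_self_nonneg (A i j * B j i).im]
    have h3 := mul_le_mul h1 h2 (Complex.normSq_nonneg _)
      (mul_nonneg (psd_diag_re hA i) (psd_diag_re hA j))
    have p1 := mul_nonneg (psd_diag_re hA i) (psd_diag_re hB j)
    have p2 := mul_nonneg (psd_diag_re hA j) (psd_diag_re hB i)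
    apply le_of_sq_le_sq _ (by positivity)
    nlinarith [sq_nonneg ((A i i).re * (B j j).re - (A j j).re * (B i i).re)]
  have e : (A * B).trace.re = ∑ i, ∑ j, (A i j * B j i).re := by
    simp [Matrix.trace, Matrix.mul_apply]
  rw [e]
  calc _ ≤ ∑ i, ∑ j, ((A i i).re * (B j j).re + (A j j).re * (B i i).re) / 2 :=
        Finset.sum_le_sum fun i _ => Finset.sum_le_sum fun j _ => key i j
    _ = _ := by
      have c : ∑ i, ∑ j, (A j j).re * (B i i).re = ∑ i, ∑ j, (A i i).re * (B j j).re :=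
        Finset.sum_comm
      simp only [← Finset.sum_div, Finset.sum_add_distrib, c]
      simp [Matrix.trace, Finset.sum_mul_sum]

theorem obs_sq {d : Type*} [Fintype d] [DecidableEq d] {M N : Matrix d d ℂ}
    (hM : M.PosSemidef) (hN : N.PosSemidef) (h : N + M = 1) (i : d) :
    ∑ j, Complex.normSq ((M - N) i j) ≤ 1 := by
  have hN' : N = 1 - M := by rw [← h]; simp
  have e : (M - N) * (M - N)ᴴ + (4:ℕ) • (M * N * Mᴴ + N * M * Nᴴ) = 1 := by
    rw [conjTranspose_sub, hM.1.eq, hN.1.eq, hN']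
    noncomm_ring
  have e2 := congrArg (fun X => (X i i).re) e
  have p1 := psd_diag_re (hN.mul_mul_conjTranspose_same M) i
  have p2 := psd_diag_re (hM.mul_mul_conjTranspose_same N) i
  have e3 : (((M - N) * (M - N)ᴴ) i i).re = ∑ j, Complex.normSq ((M - N) i j) := by
    rw [Matrix.mul_apply, Complex.re_sum]
    refine Finset.sum_congr rfl fun j _ => ?_
    rw [conjTranspose_apply, Complex.normSq_apply]
    simp
    ring
  simp only [Matrix.add_apply, Matrix.smul_apply, Complex.add_re, e3, Matrix.one_apply_eq, Complex.one_re] at e2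
  simp at e2
  simp only [Matrix.sub_apply]
  linarith

/-- classical part -/
theorem classical (n : ℕ) (q C : ℝ) (hq0 : 0 ≤ q) (hq : q ≤ 1 / 2)
    (P : (Fin n → Bool) → ℝ) (hP : ∀ z, 0 ≤ P z) (hP1 : ∑ z, P z = 1) (hPC : ∀ z, P z ≤ C)
    (hb : ∀ i, ∑ z, (if z i then P z else 0) ≤ q) :
    n * (q * Real.log q + (1 - q) * Real.log (1 - q)) ≤ Real.log C := by
  have hC : 0 < C := by
    by_contra h
    have : ∑ z, P z ≤ 0 := Finset.sum_nonpos fun z _ => (hPC z).trans (not_lt.1 h)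
    linarith
  rcases hq0.eq_or_lt with rfl | hq0
  · have hz : ∀ z, z ≠ (fun _ => false) → P z = 0 := by
      intro z hz
      obtain ⟨i, hi⟩ := Function.ne_iff.1 hz
      have hi : z i = true := by simpa using hi
      have := Finset.single_le_sum (f := fun z : Fin n → Bool => if z i then P z else 0)
        (fun z _ => by split_ifs <;> simp [hP]) (Finset.mem_univ z)
      simp only [hi, if_true] at this
      exact le_antisymm (this.trans (hb i)) (hP z)
    rw [Fintype.sum_eq_single _ hz] at hP1
    have := hPC (fun _ => false)
    rw [hP1] at this
    simpa using Real.log_nonneg this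
  · have hq1 : 0 < 1 - q := by linarith
    set r : Bool → ℝ := fun b => if b then q else 1 - q with hr
    have hrpos : ∀ b, 0 < r b := by intro b; cases b <;> simp [hr] <;> linarith
    have hR : ∑ z : Fin n → Bool, ∏ i, r (z i) = 1 := by
      rw [← Fintype.prod_sum (fun (_ : Fin n) b => r b)]
      simp [hr]
    have h1 : ∑ z, P z * (Real.log (∏ i, r (z i)) - Real.log C) ≤ 0 := by
      calc _ ≤ ∑ z, (∏ i, r (z i) - P z) := by
            refine Finset.sum_le_sum fun z _ => ?_
            have hp : 0 < ∏ i, r (z i) := Finset.prod_pos fun i _ => hrpos _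
            rw [← Real.log_div hp.ne' hC.ne']
            have h := Real.log_le_sub_one_of_pos (div_pos hp hC)
            calc _ ≤ P z * ((∏ i, r (z i)) / C - 1) := mul_le_mul_of_nonneg_left h (hP z)
              _ = P z / C * (∏ i, r (z i)) - P z := by ring
              _ ≤ 1 * (∏ i, r (z i)) - P z := by
                gcongr
                exact (div_le_one hC).2 (hPC z)
              _ = _ := by ring
        _ = 0 := by rw [Finset.sum_sub_distrib, hR, hP1]; ring
    have h2 : ∑ z, P z * Real.log (∏ i, r (z i)) ≤ Real.log C := by
      simp only [mul_sub, Finset.sum_sub_distrib, ← Finset.sum_mul, hP1] at h1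
      linarith
    refine le_trans ?_ h2
    have h3 : ∀ z, P z * Real.log (∏ i, r (z i)) = ∑ i, P z * Real.log (r (z i)) := by
      intro z
      rw [Real.log_prod (fun i _ => (hrpos _).ne'), Finset.mul_sum]
    simp only [h3]
    rw [Finset.sum_comm]
    have h4 : ∀ i : Fin n, q * Real.log q + (1 - q) * Real.log (1 - q) ≤
        ∑ z, P z * Real.log (r (z i)) := by
      intro i
      have : ∀ z, P z * Real.log (r (z i)) = (if z i then P z else 0) * (Real.log q - Real.log (1 - q))
          + P z * Real.log (1 - q) := by
        intro z
        cases h : z i <;> simp [hr]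
        ring
      simp only [this, Finset.sum_add_distrib, ← Finset.sum_mul, hP1]
      have hl : Real.log q ≤ Real.log (1 - q) := Real.log_le_log hq0 (by linarith)
      nlinarith [hb i]
    calc _ = ∑ i : Fin n, (q * Real.log q + (1 - q) * Real.log (1 - q)) := by simp; ring
      _ ≤ _ := Finset.sum_le_sum fun i _ => h4 i

theorem core {d : Type*} [Fintype d] [DecidableEq d] (n : ℕ) (p : ℝ) (hp : 1 / 2 ≤ p)
    (ρ : (Fin n → Bool) → Matrix d d ℂ)
    (hρ : ∀ x, (ρ x).PosSemidef ∧ (ρ x).trace = 1)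
    (hQRAC : ∀ i : Fin n, ∃ M : Bool → Matrix d d ℂ,
      (∀ b, (M b).PosSemidef) ∧ M false + M true = 1 ∧
      ∀ (x : Fin n → Bool) (b : Bool), x i = b → p ≤ ((M b * ρ x).trace).re)
    (lam : d → ℝ) (hlam : ∑ x, ρ x = diagonal (fun i => (lam i : ℂ))) :
    ∃ P : (Fin n → Bool) → ℝ, (∀ z, 0 ≤ P z) ∧ ∑ z, P z = 1 ∧
      (∀ z, P z ≤ Fintype.card d / 2 ^ n) ∧
      ∀ i, ∑ z, (if z i then P z else 0) ≤ 2 * p * (1 - p) := by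
  have hij : ∀ i j, ∑ x, ρ x i j = if i = j then (lam i : ℂ) else 0 := by
    intro i j
    rw [← Matrix.sum_apply, hlam, diagonal_apply]
  have hii : ∀ i, ∑ x, (ρ x i i).re = lam i := by
    intro i
    rw [← Complex.re_sum, hij]; simp
  have hl0 : ∀ i, 0 ≤ lam i := fun i => by
    rw [← hii]; exact Finset.sum_nonneg fun x _ => psd_diag_re (hρ x).1 i
  have hz : ∀ i, lam i = 0 → ∀ x, (ρ x i i).re = 0 := by
    intro i hi x
    rw [← hii] at hi
    exact (Finset.sum_eq_zero_iff_of_nonneg (fun x _ => psd_diag_re (hρ x).1 i)).1 hi x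
      (Finset.mem_univ x)
  have hz2 : ∀ i j, lam i = 0 ∨ lam j = 0 → ∀ x, ρ x i j = 0 := by
    intro i j h x
    have := psd_entry (hρ x).1 i j
    have h0 : (ρ x i i).re * (ρ x j j).re = 0 := by
      rcases h with h | h <;> simp [hz _ h x]
    rw [h0] at this
    exact Complex.normSq_eq_zero.1 (le_antisymm this (Complex.normSq_nonneg _))
  have htr : ∀ x, ∑ i, (ρ x i i).re = 1 := by
    intro x
    have := congrArg Complex.re (hρ x).2
    simpa [Matrix.trace] using this
  have hlsum : ∑ i, lam i = 2 ^ n := by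
    simp only [← hii]
    rw [Finset.sum_comm]; simp [htr]
  set w : d → ℝ := fun i => (√(lam i))⁻¹ with hw
  have hwl1 : ∀ i, lam i ≠ 0 → w i * w i * lam i = 1 := by
    intro i hi
    have h1 : √(lam i) ≠ 0 := (Real.sqrt_pos.2 (lt_of_le_of_ne (hl0 i) hi.symm)).ne'
    have h2 := Real.mul_self_sqrt (hl0 i)
    simp only [hw]
    field_simp
    nlinarith
  let W : Matrix d d ℂ := diagonal (fun i => (w i : ℂ))
  let Q : (Fin n → Bool) → Matrix d d ℂ := fun y => W * ρ y * Wᴴ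
  have hQ : ∀ y, (Q y).PosSemidef := fun y => (hρ y).1.mul_mul_conjTranspose_same W
  have hQe : ∀ y i j, Q y i j = w i * w j * ρ y i j := by
    intro y i j
    simp [Q, W, diagonal_conjTranspose, mul_diagonal, diagonal_mul]
    ring
  let G : (Fin n → Bool) → (Fin n → Bool) → ℝ := fun y x => (Q y * ρ x).trace.re
  have hGe : ∀ y x, G y x = ∑ i, ∑ j, w i * w j * (ρ y i j * ρ x j i).re := by
    intro y x
    simp only [G, Matrix.trace, Matrix.diag, Matrix.mul_apply, hQe, Complex.re_sum]
    refine Finset.sum_congr rfl fun i _ => Finset.sum_congr rfl fun j _ => ?_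
    rw [mul_assoc, ← Complex.ofReal_mul, Complex.re_ofReal_mul]
  have hG0 : ∀ y x, 0 ≤ G y x := fun y x => psd_trace_mul_nonneg (hQ y) (hρ x).1
  have hG1 : ∀ y x, G y x ≤ (Q y).trace.re := fun y x => by
    have := psd_trace_mul_le (hQ y) (hρ x).1
    simpa [(hρ x).2] using this
  have hGs : ∀ x, ∑ y, G y x = 1 := by
    intro x
    simp only [hGe]
    rw [Finset.sum_comm, ← htr x]
    refine Finset.sum_congr rfl fun i _ => ?_
    rw [Finset.sum_comm]
    have : ∀ j, ∑ y, w i * w j * (ρ y i j * ρ x j i).re =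
        if i = j then w i * w i * lam i * (ρ x i i).re else 0 := by
      intro j
      rw [← Finset.mul_sum, ← Complex.re_sum, ← Finset.sum_mul, hij]
      split_ifs with h
      · subst h; rw [Complex.re_ofReal_mul]; ring
      · simp
    simp only [this, Finset.sum_ite_eq, Finset.mem_univ, if_true]
    by_cases h : lam i = 0
    · rw [hz i h]; simp
    · rw [hwl1 i h]; simp
  have hQt : ∑ y, (Q y).trace.re ≤ Fintype.card d := by
    simp only [Matrix.trace, Matrix.diag, hQe, Complex.re_sum]
    rw [Finset.sum_comm]
    calc _ ≤ ∑ i : d, (1 : ℝ) := by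
          refine Finset.sum_le_sum fun i _ => ?_
          simp only [← Complex.ofReal_mul, Complex.re_ofReal_mul]
          rw [← Finset.mul_sum, hii]
          by_cases h : lam i = 0
          · rw [h]; simp
          · rw [hwl1 i h]
      _ = _ := by simp
  let X : (Fin n → Bool) → (Fin n → Bool) → (Fin n → Bool) := fun x z i => xor (x i) (z i)
  have hX : ∀ x, Function.Involutive (X x) := by
    intro x z; funext i; simp [X]
  have hX' : ∀ z x, X x z = X z x := by
    intro z x; funext i; simp [X, Bool.xor_comm]
  have hXs : ∀ x (f : (Fin n → Bool) → ℝ), ∑ z, f (X x z) = ∑ z, f z := fun x f =>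
    Equiv.sum_comp (hX x).toPerm f
  have h2n : (0:ℝ) < 2 ^ n := by positivity
  have hcard : (Fintype.card (Fin n → Bool) : ℝ) = 2 ^ n := by simp
  refine ⟨fun z => (∑ x, G (X x z) x) / 2 ^ n, ?_, ?_, ?_, ?_⟩
  · intro z
    exact div_nonneg (Finset.sum_nonneg fun x _ => hG0 _ _) h2n.le
  · rw [← Finset.sum_div, Finset.sum_comm]
    have hx : ∀ x, ∑ z, G (X x z) x = 1 := fun x => (hXs x (fun y => G y x)).trans (hGs x)
    simp [hx]
  · intro z
    dsimp only
    gcongr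
    calc _ ≤ ∑ x, (Q (X x z)).trace.re := Finset.sum_le_sum fun x _ => hG1 _ _
      _ = ∑ x, (Q (X z x)).trace.re := by simp only [hX' z]
      _ = _ := hXs z (fun y => (Q y).trace.re)
      _ ≤ _ := hQt
  · intro k
    obtain ⟨M, hM, hM1, hMp⟩ := hQRAC k
    let s : (Fin n → Bool) → ℝ := fun x => if x k then 1 else -1
    let E : Matrix d d ℂ := M true - M false
    let F : Matrix d d ℂ := ∑ x, (s x : ℂ) • ρ x
    have hFe : ∀ i j, F i j = ∑ x, (s x : ℂ) * ρ x i j := by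
      intro i j; simp [F, Matrix.sum_apply]
    have hFh : ∀ i j, F j i = star (F i j) := by
      intro i j
      simp only [hFe, star_sum, star_mul']
      refine Finset.sum_congr rfl fun x _ => ?_
      rw [(hρ x).1.1.apply]; simp
    have hEh : ∀ i j, E j i = star (E i j) := by
      intro i j
      exact ((((hM true).1.sub (hM false).1)).apply j i).symm
    have hF0 : ∀ i j, lam i = 0 ∨ lam j = 0 → F i j = 0 := by
      intro i j h
      rw [hFe]; exact Finset.sum_eq_zero fun x _ => by rw [hz2 i j h]; simp
    have hEs : ∀ i, ∑ j, Complex.normSq (E i j) ≤ 1 := obs_sq (hM true) (hM false) hM1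
    set c := 2 * p - 1 with hc
    have hc0 : 0 ≤ c := by rw [hc]; linarith
    -- total bias
    have hbias : ∑ x, ∑ y, s x * s y * G y x = ∑ i, ∑ j, w i * w j * Complex.normSq (F i j) := by
      have e1 : ∀ i j, Complex.normSq (F i j) = ∑ x, ∑ y, s x * s y * (ρ y i j * ρ x j i).re := by
        intro i j
        have : Complex.normSq (F i j) = (F j i * F i j).re := by
          rw [hFh i j, Complex.normSq_apply]; simp
        rw [this, hFe, hFe, Finset.sum_mul_sum, Complex.re_sum]
        refine Finset.sum_congr rfl fun x _ => ?_
        rw [Complex.re_sum]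
        refine Finset.sum_congr rfl fun y _ => ?_
        rw [← Complex.re_ofReal_mul]
        congr 1; push_cast; ring
      simp only [e1, hGe, Finset.mul_sum]
      calc _ = ∑ x, ∑ i, ∑ y, ∑ j, s x * s y * (w i * w j * (ρ y i j * ρ x j i).re) :=
            Finset.sum_congr rfl fun x _ => Finset.sum_comm
        _ = ∑ i, ∑ x, ∑ y, ∑ j, s x * s y * (w i * w j * (ρ y i j * ρ x j i).re) :=
            Finset.sum_comm
        _ = ∑ i, ∑ x, ∑ j, ∑ y, s x * s y * (w i * w j * (ρ y i j * ρ x j i).re) :=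
            Finset.sum_congr rfl fun i _ => Finset.sum_congr rfl fun x _ => Finset.sum_comm
        _ = ∑ i, ∑ j, ∑ x, ∑ y, s x * s y * (w i * w j * (ρ y i j * ρ x j i).re) :=
            Finset.sum_congr rfl fun i _ => Finset.sum_comm
        _ = _ := by
            refine Finset.sum_congr rfl fun i _ => Finset.sum_congr rfl fun j _ =>
              Finset.sum_congr rfl fun x _ => Finset.sum_congr rfl fun y _ => by ring
    have hEF : c * 2 ^ n ≤ ∑ i, ∑ j, (E i j * F j i).re := by
      have e1 : ∑ i, ∑ j, (E i j * F j i).re = ∑ x, s x * (E * ρ x).trace.re := by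
        have : ∑ i, ∑ j, (E i j * F j i).re = (E * F).trace.re := by
          simp [Matrix.trace, Matrix.mul_apply]
        rw [this]
        simp only [F, Matrix.mul_sum, Matrix.trace_sum, Complex.re_sum, Matrix.mul_smul,
          Matrix.trace_smul, smul_eq_mul, Complex.re_ofReal_mul]
      rw [e1]
      calc _ = ∑ x : Fin n → Bool, c := by simp; ring
        _ ≤ _ := by
          refine Finset.sum_le_sum fun x _ => ?_
          have h1 : (M false * ρ x).trace.re + (M true * ρ x).trace.re = 1 := by
            rw [← Complex.add_re, ← Matrix.trace_add, ← Matrix.add_mul, hM1, Matrix.one_mul, (hρ x).2]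
            simp
          have h2 : (E * ρ x).trace.re = (M true * ρ x).trace.re - (M false * ρ x).trace.re := by
            simp [E, Matrix.sub_mul]
          rw [h2]
          cases h : x k
          · have := hMp x false h
            simp only [s, h]; simp; linarith
          · have := hMp x true h
            simp only [s, h]; simp; linarith
    have hpt : ∀ i j, 2 * c * (E i j * F j i).re ≤ w i * w j * Complex.normSq (F i j) +
        c ^ 2 * ((lam i + lam j) / 2 * Complex.normSq (E i j)) := by
      intro i j
      by_cases h : lam i = 0 ∨ lam j = 0
      · rw [hFh i j, hF0 i j h]
        have := hl0 i
        have := hl0 j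
        have := Complex.normSq_nonneg (E i j)
        simp
        positivity
      · push Not at h
        have hu : 0 < √(lam i) := Real.sqrt_pos.2 (lt_of_le_of_ne (hl0 i) h.1.symm)
        have hv : 0 < √(lam j) := Real.sqrt_pos.2 (lt_of_le_of_ne (hl0 j) h.2.symm)
        have hu2 := Real.mul_self_sqrt (hl0 i)
        have hv2 := Real.mul_self_sqrt (hl0 j)
        set u := √(lam i)
        set v := √(lam j)
        have hww : w i * w j = (u * v)⁻¹ := by simp only [hw, mul_inv]; rfl
        have huv : u * v ≤ (lam i + lam j) / 2 := by nlinarith [sq_nonneg (u - v)]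
        have ha : 0 < u * v := mul_pos hu hv
        have h1 : c ^ 2 * ((u * v) * Complex.normSq (E i j)) ≤
            c ^ 2 * ((lam i + lam j) / 2 * Complex.normSq (E i j)) := by
          have := Complex.normSq_nonneg (E i j)
          gcongr
        refine le_trans ?_ (add_le_add_right h1 _)
        rw [hww, hFh i j]
        generalize u * v = a at ha
        simp only [Complex.normSq_apply, Complex.mul_re, Complex.star_def, Complex.conj_re, Complex.conj_im]
        generalize (E i j).re = e1
        generalize (E i j).im = e2
        generalize (F i j).re = f1
        generalize (F i j).im = f2
        have : a⁻¹ * (f1 * f1 + f2 * f2) + c ^ 2 * (a * (e1 * e1 + e2 * e2)) -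
            2 * c * (e1 * f1 - e2 * -f2) = a⁻¹ * ((f1 - c * a * e1) ^ 2 + (f2 - c * a * e2) ^ 2) := by
          field_simp
          ring
        have h3 : 0 ≤ a⁻¹ * ((f1 - c * a * e1) ^ 2 + (f2 - c * a * e2) ^ 2) := by positivity
        linarith
    have hsumE : ∑ i, ∑ j, (lam i + lam j) / 2 * Complex.normSq (E i j) ≤ 2 ^ n := by
      have hs : ∀ i j, Complex.normSq (E i j) = Complex.normSq (E j i) := by
        intro i j; rw [hEh i j, Complex.star_def, Complex.normSq_conj]
      have e1 : ∑ i, ∑ j, lam j * Complex.normSq (E i j) = ∑ i, ∑ j, lam i * Complex.normSq (E i j) := by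
        rw [Finset.sum_comm]
        exact Finset.sum_congr rfl fun i _ => Finset.sum_congr rfl fun j _ => by rw [hs]
      calc _ = (∑ i, ∑ j, lam i * Complex.normSq (E i j) + ∑ i, ∑ j, lam j * Complex.normSq (E i j)) / 2 := by
            simp only [← Finset.sum_add_distrib, Finset.sum_div]
            exact Finset.sum_congr rfl fun i _ => Finset.sum_congr rfl fun j _ => by ring
        _ = ∑ i, lam i * ∑ j, Complex.normSq (E i j) := by rw [e1]; simp [Finset.mul_sum]
        _ ≤ ∑ i, lam i * 1 := Finset.sum_le_sum fun i _ => mul_le_mul_of_nonneg_left (hEs i) (hl0 i)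
        _ = _ := by simp [hlsum]
    have hfin : c ^ 2 * 2 ^ n ≤ ∑ x, ∑ y, s x * s y * G y x := by
      have h1 := Finset.sum_le_sum fun i (_ : i ∈ Finset.univ) =>
        Finset.sum_le_sum fun j (_ : j ∈ Finset.univ) => hpt i j
      simp only [Finset.sum_add_distrib, ← Finset.mul_sum] at h1
      rw [← hbias] at h1
      have h2 := mul_le_mul_of_nonneg_left hEF (by linarith : 0 ≤ 2 * c)
      have h3 := mul_le_mul_of_nonneg_left hsumE (sq_nonneg c)
      nlinarith
    have e : ∑ z, (if z k then (∑ x, G (X x z) x) / 2 ^ n else 0) =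
        (∑ x, ∑ y, (1 - s x * s y) / 2 * G y x) / 2 ^ n := by
      have e1 : ∀ x, ∑ y, (1 - s x * s y) / 2 * G y x = ∑ z, if z k then G (X x z) x else 0 := by
        intro x
        rw [← hXs x]
        refine Finset.sum_congr rfl fun z _ => ?_
        cases h1 : x k <;> cases h2 : z k <;> simp [s, X, h1, h2]
      simp only [e1]
      rw [Finset.sum_comm, Finset.sum_div]
      refine Finset.sum_congr rfl fun z _ => ?_
      split_ifs <;> simp
    rw [e]
    rw [div_le_iff₀ h2n]
    have e3 : ∑ x, ∑ y, (1 - s x * s y) / 2 * G y x =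
        (2 ^ n - ∑ x, ∑ y, s x * s y * G y x) / 2 := by
      have : (2:ℝ) ^ n = ∑ x, ∑ y, G y x := by simp [hGs]
      rw [this]
      simp only [← Finset.sum_sub_distrib, Finset.sum_div]
      exact Finset.sum_congr rfl fun i _ => Finset.sum_congr rfl fun j _ => by ring
    rw [e3]
    have : (2 ^ n - c ^ 2 * 2 ^ n) / 2 = 2 * p * (1 - p) * 2 ^ n := by rw [hc]; ring
    linarith

theorem core2 {d : Type*} [Fintype d] [DecidableEq d] (n : ℕ) (p : ℝ) (hp : 1 / 2 ≤ p)
    (ρ : (Fin n → Bool) → Matrix d d ℂ)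
    (hρ : ∀ x, (ρ x).PosSemidef ∧ (ρ x).trace = 1)
    (hQRAC : ∀ i : Fin n, ∃ M : Bool → Matrix d d ℂ,
      (∀ b, (M b).PosSemidef) ∧ M false + M true = 1 ∧
      ∀ (x : Fin n → Bool) (b : Bool), x i = b → p ≤ ((M b * ρ x).trace).re) :
    ∃ P : (Fin n → Bool) → ℝ, (∀ z, 0 ≤ P z) ∧ ∑ z, P z = 1 ∧
      (∀ z, P z ≤ Fintype.card d / 2 ^ n) ∧
      ∀ i, ∑ z, (if z i then P z else 0) ≤ 2 * p * (1 - p) := by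
  have hS : (∑ x, ρ x).IsHermitian :=
    (Matrix.posSemidef_sum Finset.univ fun x _ => (hρ x).1).1
  let U : Matrix d d ℂ := hS.eigenvectorUnitary
  have hU1 : Uᴴ * U = 1 := (Matrix.mem_unitaryGroup_iff').1 hS.eigenvectorUnitary.2
  have hU2 : U * Uᴴ = 1 := (Matrix.mem_unitaryGroup_iff).1 hS.eigenvectorUnitary.2
  have hD : Uᴴ * (∑ x, ρ x) * U = diagonal (fun i => (hS.eigenvalues i : ℂ)) := by
    have := hS.conjStarAlgAut_star_eigenvectorUnitary
    rw [Unitary.conjStarAlgAut_star_apply] at this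
    exact this
  refine core n p hp (fun x => Uᴴ * ρ x * U) ?_ ?_ hS.eigenvalues ?_
  · intro x
    refine ⟨(hρ x).1.conjTranspose_mul_mul_same U, ?_⟩
    rw [Matrix.trace_mul_comm, ← Matrix.mul_assoc, hU2, Matrix.one_mul, (hρ x).2]
  · intro i
    obtain ⟨M, hM, hM1, hMp⟩ := hQRAC i
    refine ⟨fun b => Uᴴ * M b * U, fun b => (hM b).conjTranspose_mul_mul_same U, ?_, ?_⟩
    · rw [← Matrix.add_mul, ← Matrix.mul_add, hM1, Matrix.mul_one, hU1]
    · intro x b hb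
      have : Uᴴ * M b * U * (Uᴴ * ρ x * U) = Uᴴ * (M b * ρ x * U) := by
        calc _ = Uᴴ * M b * (U * Uᴴ) * ρ x * U := by simp only [Matrix.mul_assoc]
          _ = _ := by rw [hU2]; simp only [Matrix.mul_assoc, Matrix.one_mul]
      rw [this, Matrix.trace_mul_comm, Matrix.mul_assoc, hU2, Matrix.mul_one]
      exact hMp x b hb
  · rw [← hD, Matrix.mul_sum, Matrix.sum_mul]


/-- If an (n,m,p)-QRAC exists with 1/2 ≤ p ≤ 1, then
`m ≥ (1 − H(2p(1−p)))·n − log₂(n+1)` where `H` is binary entropy (base 2). -/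
theorem qrac_qubit_lower_bound (n m : ℕ) (p : ℝ) (hp : 1 / 2 ≤ p) (hp1 : p ≤ 1)
    (ρ : (Fin n → Bool) → Matrix (Fin (2 ^ m)) (Fin (2 ^ m)) ℂ)
    (hρ : ∀ x, (ρ x).PosSemidef ∧ (ρ x).trace = 1)
    (hQRAC : ∀ i : Fin n, ∃ M : Bool → Matrix (Fin (2 ^ m)) (Fin (2 ^ m)) ℂ,
      (∀ b, (M b).PosSemidef) ∧ M false + M true = 1 ∧
      ∀ (x : Fin n → Bool) (b : Bool), x i = b → p ≤ ((M b * ρ x).trace).re) :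
    (1 - binEntropy2 (2 * p * (1 - p))) * n - Real.logb 2 (n + 1) ≤ (m : ℝ) := by
  have hq0 : 0 ≤ 2 * p * (1 - p) := by nlinarith
  have hq : 2 * p * (1 - p) ≤ 1 / 2 := by nlinarith [sq_nonneg (2 * p - 1)]
  obtain ⟨P, h1, h2, h3, h4⟩ := core2 n p hp ρ hρ hQRAC
  have h := classical n _ _ hq0 hq P h1 h2 h3 h4
  have hl2 : 0 < Real.log 2 := Real.log_pos (by norm_num)
  have hC : Real.log ((Fintype.card (Fin (2 ^ m)) : ℝ) / 2 ^ n) = (m - n) * Real.log 2 := by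
    rw [Real.log_div (by simp) (by positivity)]
    simp
    ring
  rw [hC] at h
  have hlog : 0 ≤ Real.logb 2 (n + 1) := Real.logb_nonneg (by norm_num) (by simp)
  have hH : binEntropy2 (2 * p * (1 - p)) * Real.log 2 =
      -(2 * p * (1 - p) * Real.log (2 * p * (1 - p)) +
        (1 - 2 * p * (1 - p)) * Real.log (1 - 2 * p * (1 - p))) := by
    simp only [binEntropy2, Real.logb]
    field_simp
    ring
  have : (1 - binEntropy2 (2 * p * (1 - p))) * n ≤ (m : ℝ) := by
    refine le_of_mul_le_mul_right ?_ hl2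
    nlinarith
  linarith
end

section
/- There exists a universal constant C > 0 such that for all integers n ≥ 2, m ≥ 1, all p ∈ [1/2, 1], and all η ∈ (0,1): if an (n,m,p)-quantum random access code exists, then an (n, m', 1 − 2p(1−p) − η)-classical random access code exists for some m' ≤ m + C·(log₂ n + log₂(1/η)). -/
open Matrix BigOperators ComplexOrder

namespace QR

section mats
open scoped Matrix.Norms.L2Operator MatrixOrder

variable {d : ℕ}

lemma norm_diff_le_one (M N : Matrix (Fin d) (Fin d) ℂ) (hM : M.PosSemidef) (hN : N.PosSemidef)
    (h : M + N = 1) : ‖N - M‖ ≤ 1 := by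
  have hN' : N = 1 - M := by rw [← h]; abel
  have hH : (N - M).IsHermitian := hN.1.sub hM.1
  have e : ‖(N - M)ᴴ * (N - M)‖ = ‖N - M‖ * ‖N - M‖ := l2_opNorm_conjTranspose_mul_self _
  have h0 : (0 : Matrix (Fin d) (Fin d) ℂ) ≤ (N - M)ᴴ * (N - M) :=
    nonneg_iff_posSemidef.2 (posSemidef_conjTranspose_mul_self _)
  have h1 : (N - M)ᴴ * (N - M) ≤ 1 := by
    rw [le_iff]
    have p1 := hN.mul_mul_conjTranspose_same M
    have p2 := hM.mul_mul_conjTranspose_same N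
    rw [hM.1.eq] at p1
    rw [hN.1.eq] at p2
    have p3 := (p1.add p2).add (p1.add p2)
    have p4 := p3.add p3
    have e4 : 1 - (N - M)ᴴ * (N - M) = M * N * M + N * M * N + (M * N * M + N * M * N) +
        (M * N * M + N * M * N + (M * N * M + N * M * N)) := by
      rw [hH.eq, hN']
      noncomm_ring
    rw [e4]
    exact p4
  have h2 : ‖(N - M)ᴴ * (N - M)‖ ≤ 1 := (CStarAlgebra.norm_le_one_iff_of_nonneg _ h0).2 h1
  rw [e] at h2
  nlinarith [norm_nonneg (N - M)]

lemma trace_re_le (X : Matrix (Fin d) (Fin d) ℂ) : X.trace.re ≤ d * ‖X‖ := by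
  have h : ∀ i, (X i i).re ≤ ‖X‖ := by
    intro i
    have h1 := l2_opNorm_mulVec X (EuclideanSpace.single i (1:ℂ))
    have h2 := PiLp.norm_apply_le (WithLp.toLp 2 (X *ᵥ (EuclideanSpace.single i (1:ℂ)).ofLp)) i
    simp at h1 h2
    exact (Complex.re_le_norm _).trans (h2.trans h1)
  calc X.trace.re = ∑ i, (X i i).re := by simp [Matrix.trace]
    _ ≤ ∑ i : Fin d, ‖X‖ := Finset.sum_le_sum fun i _ => h i
    _ = _ := by simp

def sg (b : Bool) : ℝ := if b then 1 else -1

lemma mono_nonneg {n : ℕ} (e : Fin n → ℕ) :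
    0 ≤ ∑ x : Fin n → Bool, ∏ i, sg (x i) ^ e i := by
  have := Finset.prod_univ_sum (fun _ : Fin n => (Finset.univ : Finset Bool)) (fun i b => sg b ^ e i)
  rw [Fintype.piFinset_univ] at this
  rw [← this]
  apply Finset.prod_nonneg
  intro i _
  simp only [Fintype.sum_bool, sg]
  rcases Nat.even_or_odd (e i) with h | h <;> simp [h.neg_one_pow]

lemma exp_sum {n : ℕ} (θ : ℝ) :
    ∑ x : Fin n → Bool, Real.exp (θ * ∑ i, sg (x i)) = (Real.exp θ + Real.exp (-θ)) ^ n := by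
  have := Finset.prod_univ_sum (fun _ : Fin n => (Finset.univ : Finset Bool))
    (fun i b => Real.exp (θ * sg b))
  rw [Fintype.piFinset_univ] at this
  simp only [Finset.mul_sum, Real.exp_sum]
  rw [← this]
  simp [sg]

noncomputable def SS {n : ℕ} (A : Fin n → Matrix (Fin d) (Fin d) ℂ) (x : Fin n → Bool) :
    Matrix (Fin d) (Fin d) ℂ := ∑ i, sg (x i) • A i

lemma mono_step {n : ℕ} (e : Fin n → ℕ) (x : Fin n → Bool) (i : Fin n) :
    (∏ j, sg (x j) ^ e j) * sg (x i) = ∏ j, sg (x j) ^ (e + Pi.single i 1 : Fin n → ℕ) j := by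
  simp only [Pi.add_apply, pow_add, Finset.prod_mul_distrib]
  congr 1
  rw [Finset.prod_eq_single i]
  · simp
  · intro b _ hb; simp [Pi.single_eq_of_ne hb]
  · simp

lemma moment {n : ℕ} (A : Fin n → Matrix (Fin d) (Fin d) ℂ) (hA : ∀ i, ‖A i‖ ≤ 1) (k : ℕ) :
    ∀ e : Fin n → ℕ, ‖∑ x : Fin n → Bool, (∏ i, sg (x i) ^ e i) • SS A x ^ k‖ ≤
      ∑ x : Fin n → Bool, (∏ i, sg (x i) ^ e i) * (∑ i, sg (x i)) ^ k := by
  induction k with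
  | zero =>
    intro e
    simp only [pow_zero, mul_one]
    rw [← Finset.sum_smul, norm_smul, Real.norm_of_nonneg (mono_nonneg e)]
    have : ‖(1 : Matrix (Fin d) (Fin d) ℂ)‖ ≤ 1 := by
      rw [← diagonal_one, l2_opNorm_diagonal]
      exact (pi_norm_le_iff_of_nonneg zero_le_one).2 (by simp)
    nlinarith [mono_nonneg e]
  | succ k ih =>
    intro e
    have h1 : ∑ x : Fin n → Bool, (∏ i, sg (x i) ^ e i) • SS A x ^ (k+1)
      = ∑ i, (∑ x : Fin n → Bool, (∏ j, sg (x j) ^ (e + Pi.single i 1 : Fin n → ℕ) j) • SS A x ^ k) * A i := by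
      simp only [Finset.sum_mul, ← mono_step]
      rw [Finset.sum_comm]
      refine Finset.sum_congr rfl fun x _ => ?_
      rw [pow_succ]
      conv_lhs => rw [SS.eq_1 A x]
      rw [Finset.mul_sum, Finset.smul_sum]
      refine Finset.sum_congr rfl fun i _ => ?_
      rw [mul_smul_comm, smul_mul_assoc, smul_smul]
      rfl
    have h2 : ∑ x : Fin n → Bool, (∏ i, sg (x i) ^ e i) * (∑ i, sg (x i)) ^ (k+1)
      = ∑ i, (∑ x : Fin n → Bool, (∏ j, sg (x j) ^ (e + Pi.single i 1 : Fin n → ℕ) j) * (∑ i, sg (x i)) ^ k) := by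
      simp only [← mono_step]
      rw [Finset.sum_comm]
      refine Finset.sum_congr rfl fun x _ => ?_
      rw [pow_succ, ← Finset.sum_mul, ← Finset.mul_sum]
      ring
    rw [h1, h2]
    refine (norm_sum_le _ _).trans (Finset.sum_le_sum fun i _ => ?_)
    refine (norm_mul_le _ _).trans ?_
    have := ih (e + Pi.single i 1)
    nlinarith [hA i, norm_nonneg (∑ x : Fin n → Bool, (∏ j, sg (x j) ^ (e + Pi.single i 1 : Fin n → ℕ) j) • SS A x ^ k)]

lemma trace_moment {n : ℕ} (A : Fin n → Matrix (Fin d) (Fin d) ℂ) (hA : ∀ i, ‖A i‖ ≤ 1) (k : ℕ) :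
    ∑ x : Fin n → Bool, (SS A x ^ k).trace.re ≤ d * ∑ x : Fin n → Bool, (∑ i, sg (x i)) ^ k := by
  have h := moment A hA k 0
  simp only [Pi.zero_apply, pow_zero, Finset.prod_const_one, one_smul, one_mul] at h
  have h2 := trace_re_le (∑ x : Fin n → Bool, SS A x ^ k)
  rw [Matrix.trace_sum, Complex.re_sum] at h2
  exact h2.trans (by gcongr)

lemma trace_pow_eig (S : Matrix (Fin d) (Fin d) ℂ) (hS : S.IsHermitian) (k : ℕ) :
    (S ^ k).trace.re = ∑ i, hS.eigenvalues i ^ k := by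
  conv_lhs => rw [hS.spectral_theorem]
  rw [← map_pow, Unitary.conjStarAlgAut_apply, Matrix.trace_mul_cycle]
  simp [Matrix.diagonal_pow, Matrix.trace]
  refine Finset.sum_congr rfl fun i _ => ?_
  rw [← Complex.ofReal_pow, Complex.ofReal_re]

lemma exists_eig (S ρ : Matrix (Fin d) (Fin d) ℂ) (hS : S.IsHermitian) (hρ : ρ.PosSemidef)
    (ht : ρ.trace = 1) (c : ℝ) (hc : c ≤ (S * ρ).trace.re) : ∃ i, c ≤ hS.eigenvalues i := by
  by_contra! hcon
  set U : Matrix (Fin d) (Fin d) ℂ := (hS.eigenvectorUnitary).1 with hU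
  have hp := hρ.conjTranspose_mul_mul_same U
  set R := Uᴴ * ρ * U with hR
  have hUU : U * Uᴴ = 1 := by
    rw [← star_eq_conjTranspose]; exact Unitary.coe_mul_star_self _
  have htr : R.trace = 1 := by
    rw [hR, Matrix.trace_mul_cycle, hUU, one_mul, ht]
  have hSt : (S * ρ).trace.re = ∑ i, hS.eigenvalues i * (R i i).re := by
    conv_lhs => rw [hS.spectral_theorem]
    rw [Unitary.conjStarAlgAut_apply, ← hU, star_eq_conjTranspose]
    have : (U * diagonal (RCLike.ofReal ∘ hS.eigenvalues) * Uᴴ * ρ).trace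
      = (diagonal (RCLike.ofReal ∘ hS.eigenvalues) * R).trace := by
      rw [hR, Matrix.mul_assoc, Matrix.mul_assoc, Matrix.trace_mul_comm]
      simp only [Matrix.mul_assoc]
    rw [this]
    simp [Matrix.trace, Matrix.diagonal_mul]
  have hr : ∀ i, 0 ≤ (R i i).re := fun i => (Complex.le_def.1 (hp.diag_nonneg (i := i))).1
  have hsum : ∑ i, (R i i).re = 1 := by
    have := congrArg Complex.re htr
    simpa [Matrix.trace] using this
  have : ∑ i, hS.eigenvalues i * (R i i).re < ∑ i, c * (R i i).re := by
    apply Finset.sum_lt_sum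
    · intro i _; exact mul_le_mul_of_nonneg_right (hcon i).le (hr i)
    · obtain ⟨i, -, hi⟩ : ∃ i ∈ Finset.univ, 0 < (R i i).re := by
        apply Finset.exists_lt_of_sum_lt (f := fun _ => (0:ℝ))
        simp [hsum]
      exact ⟨i, Finset.mem_univ _, mul_lt_mul_of_pos_right (hcon i) hi⟩
  rw [← Finset.mul_sum, hsum] at this
  linarith

lemma hasSum_exp' (x : ℝ) : HasSum (fun k : ℕ => x ^ k / (k.factorial : ℝ)) (Real.exp x) := by
  rw [Real.exp_eq_exp_ℝ]
  exact NormedSpace.expSeries_div_hasSum_exp x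

lemma mgf {n : ℕ} (A : Fin n → Matrix (Fin d) (Fin d) ℂ) (hA : ∀ i, ‖A i‖ ≤ 1)
    (hH : ∀ x, (SS A x).IsHermitian) (θ : ℝ) (hθ : 0 ≤ θ) :
    ∑ x : Fin n → Bool, ∑ j, Real.exp (θ * (hH x).eigenvalues j) ≤
      d * (Real.exp θ + Real.exp (-θ)) ^ n := by
  rw [← exp_sum]
  have h1 := hasSum_sum (s := (Finset.univ : Finset (Fin n → Bool))) fun x _ =>
    hasSum_sum (s := (Finset.univ : Finset (Fin d))) fun j _ =>
      hasSum_exp' (θ * (hH x).eigenvalues j)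
  have h2 := (hasSum_sum (s := (Finset.univ : Finset (Fin n → Bool))) fun x _ =>
      hasSum_exp' (θ * ∑ i, sg (x i))).mul_left (d : ℝ)
  refine hasSum_le (fun k => ?_) h1 h2
  have := trace_moment A hA k
  simp only [trace_pow_eig _ (hH _)] at this
  have h3 : 0 ≤ θ ^ k / (k.factorial : ℝ) := by positivity
  have := mul_le_mul_of_nonneg_left this h3
  convert this using 1
  · simp only [Finset.mul_sum]
    refine Finset.sum_congr rfl fun x _ => Finset.sum_congr rfl fun j _ => ?_
    rw [mul_pow]; ring
  · rw [mul_left_comm]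
    congr 1
    rw [Finset.mul_sum]
    refine Finset.sum_congr rfl fun x _ => ?_
    rw [mul_pow]; ring

/-- the Nayak-type bound -/
lemma nayak {n : ℕ} (p : ℝ) (ρ : (Fin n → Bool) → Matrix (Fin d) (Fin d) ℂ)
    (hρ : ∀ x, (ρ x).PosSemidef ∧ (ρ x).trace = 1)
    (hM : ∀ i : Fin n, ∃ M : Bool → Matrix (Fin d) (Fin d) ℂ,
            (∀ b, (M b).PosSemidef) ∧ M false + M true = 1 ∧
            ∀ (x : Fin n → Bool) (b : Bool), x i = b → p ≤ ((M b * ρ x).trace).re)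
    (θ : ℝ) (hθ : 0 ≤ θ) :
    2 ^ n * Real.exp (θ * (n * (2 * p - 1))) ≤ d * (Real.exp θ + Real.exp (-θ)) ^ n := by
  choose M h1 h2 h3 using hM
  let A : Fin n → Matrix (Fin d) (Fin d) ℂ := fun i => M i true - M i false
  have hA : ∀ i, ‖A i‖ ≤ 1 := fun i => norm_diff_le_one _ _ (h1 i _) (h1 i _) (h2 i)
  have hH : ∀ x, (SS A x).IsHermitian := by
    intro x
    unfold SS
    rw [Matrix.IsHermitian, Matrix.conjTranspose_sum]
    refine Finset.sum_congr rfl fun i _ => ?_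
    rw [Matrix.conjTranspose_smul, ((h1 i true).1.sub (h1 i false).1).eq]
    simp [A]
  refine le_trans ?_ (mgf A hA hH θ hθ)
  have hx : ∀ x : Fin n → Bool, Real.exp (θ * (n * (2 * p - 1))) ≤
      ∑ j, Real.exp (θ * (hH x).eigenvalues j) := by
    intro x
    obtain ⟨j, hj⟩ := exists_eig (SS A x) (ρ x) (hH x) (hρ x).1 (hρ x).2 (n * (2 * p - 1)) (by
      have : (SS A x * ρ x).trace.re = ∑ i, sg (x i) * (A i * ρ x).trace.re := by
        simp [SS, Finset.sum_mul, Matrix.trace_sum, Complex.re_sum]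
      rw [this]
      have : ∀ i ∈ (Finset.univ : Finset (Fin n)), 2 * p - 1 ≤ sg (x i) * (A i * ρ x).trace.re := by
        intro i _
        have e1 : (M i false * ρ x).trace.re + (M i true * ρ x).trace.re = 1 := by
          rw [← Complex.add_re, ← Matrix.trace_add, ← add_mul, h2, one_mul, (hρ x).2]; simp
        have e2 : (A i * ρ x).trace.re = (M i true * ρ x).trace.re - (M i false * ρ x).trace.re := by
          simp [A, sub_mul, Matrix.trace_sub]
        have e3 := h3 i x (x i) rfl
        rw [e2]
        cases hb : x i <;> rw [hb] at e3 <;> simp [sg] <;> linarith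
      have := Finset.sum_le_sum this
      rwa [Finset.sum_const, Finset.card_univ, Fintype.card_fin, nsmul_eq_mul] at this)
    calc _ ≤ Real.exp (θ * (hH x).eigenvalues j) := by
            apply Real.exp_le_exp.2; gcongr
      _ ≤ _ := Finset.single_le_sum (f := fun j => Real.exp (θ * (hH x).eigenvalues j))
            (fun _ _ => (Real.exp_pos _).le) (Finset.mem_univ j)
  have := Finset.sum_le_sum fun x (_ : x ∈ Finset.univ) => hx x
  simpa using this

end mats
end QR

namespace QR
section bin

noncomputable def tt (n : ℕ) (p : ℝ) (j : ℕ) : ℝ := (n.choose j : ℝ) * p ^ j * (1 - p) ^ (n - j)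

lemma tt_nonneg (n : ℕ) (p : ℝ) (h0 : 0 ≤ p) (h1 : p ≤ 1) (j : ℕ) : 0 ≤ tt n p j := by
  have : 0 ≤ 1 - p := by linarith
  unfold tt; positivity

lemma tt_rec (n : ℕ) (p : ℝ) (j : ℕ) (hj : j < n) :
    tt n p (j+1) * ((j+1) * (1-p)) = tt n p j * ((n - j) * p) := by
  have h := Nat.choose_succ_right_eq n j
  have h' : (n.choose (j+1) : ℝ) * (j+1) = n.choose j * (n - j) := by
    rw [← Nat.cast_sub hj.le]; exact_mod_cast h
  have e : n - j = (n - (j+1)) + 1 := by omega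
  unfold tt
  rw [e, pow_succ, pow_succ]
  calc _ = ((n.choose (j+1) : ℝ) * (j+1)) * (p^j * p * (1-p)^(n-(j+1)) * (1-p)) := by ring
    _ = _ := by rw [h']; ring

lemma peak (n k : ℕ) (p : ℝ) (hn : 1 ≤ n) (hp : 1/2 ≤ p) (hp1 : p < 1) (hk : k ≤ n)
    (hk1 : n * p ≤ k) (hk2 : k < n * p + 1) : 1 ≤ n * (n+1) * tt n p k := by
  have hn' : (1:ℝ) ≤ n := by exact_mod_cast hn
  have h0 := tt_nonneg n p (by linarith) hp1.le
  have hq : 0 < 1 - p := by linarith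
  have hk' : (k:ℝ) ≤ n := by exact_mod_cast hk
  have hi : ∀ j, k ≤ j → j ≤ n → tt n p j ≤ tt n p k := by
    intro j hj
    induction j, hj using Nat.le_induction with
    | base => intro _; exact le_rfl
    | succ j hj ih =>
      intro hjn
      refine le_trans ?_ (ih (by omega))
      have r := tt_rec n p j (by omega)
      have hjk : (k:ℝ) ≤ j := by exact_mod_cast hj
      have hc : (n - j) * p ≤ (j+1) * (1-p) := by nlinarith
      have : tt n p (j+1) * ((j+1) * (1-p)) ≤ tt n p j * ((j+1) * (1-p)) := by
        rw [r]; exact mul_le_mul_of_nonneg_left hc (h0 j)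
      exact le_of_mul_le_mul_right this (by positivity)
  have lo : ∀ j b, j ≤ b → b + 1 ≤ k → tt n p j ≤ tt n p b := by
    intro j b hb
    induction b, hb using Nat.le_induction with
    | base => intro _; exact le_rfl
    | succ b hb ih =>
      intro hbk
      refine le_trans (ih (by omega)) ?_
      have r := tt_rec n p b (by omega)
      have hbk' : (b:ℝ) + 1 + 1 ≤ k := by exact_mod_cast hbk
      have hc : (b+1) * (1-p) ≤ (n - b) * p := by nlinarith
      have : tt n p b * ((b+1) * (1-p)) ≤ tt n p (b+1) * ((b+1) * (1-p)) := by
        rw [r]; exact mul_le_mul_of_nonneg_left hc (h0 b)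
      exact le_of_mul_le_mul_right this (by positivity)
  have all : ∀ j ∈ Finset.range (n+1), tt n p j ≤ n * tt n p k := by
    intro j hj
    have hjn : j ≤ n := by simpa [Nat.lt_succ_iff] using hj
    rcases le_or_gt k j with h | h
    · have := hi j h hjn
      nlinarith [h0 k]
    · obtain ⟨b, rfl⟩ : ∃ b, k = b + 1 := ⟨k - 1, by omega⟩
      refine (lo j b (by omega) le_rfl).trans ?_
      have r := tt_rec n p b (by omega)
      push_cast at hk'
      have hb0 : (0:ℝ) ≤ b := by positivity
      have h1 : (1 - p) ≤ (n - b) * p := by nlinarith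
      have h2 : tt n p b * (1-p) ≤ tt n p (b+1) * ((b+1) * (1-p)) := by
        rw [r]; exact mul_le_mul_of_nonneg_left h1 (h0 b)
      have h3 : tt n p (b+1) * ((b+1) * (1-p)) ≤ tt n p (b+1) * (n * (1-p)) := by
        apply mul_le_mul_of_nonneg_left _ (h0 _)
        exact mul_le_mul_of_nonneg_right hk' hq.le
      have h4 : tt n p b * (1-p) ≤ (n * tt n p (b+1)) * (1-p) := by nlinarith
      exact le_of_mul_le_mul_right h4 hq
  have hs := Finset.sum_le_sum all
  have h1 : ∑ j ∈ Finset.range (n+1), tt n p j = 1 := by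
    have := add_pow p (1-p) n
    rw [show p + (1-p) = 1 by ring, one_pow] at this
    rw [this]
    refine Finset.sum_congr rfl fun j _ => ?_
    unfold tt; ring
  rw [h1] at hs
  simp only [Finset.sum_const, Finset.card_range, nsmul_eq_mul] at hs
  push_cast at hs
  linarith

lemma dim_bound (n k : ℕ) (p d : ℝ) (hp : 1/2 ≤ p) (hp1 : p < 1) (hk : k ≤ n)
    (hk2 : k < n * p + 1)
    (H : ∀ θ : ℝ, 0 ≤ θ →
      2 ^ n * Real.exp (θ * (n * (2 * p - 1))) ≤ d * (Real.exp θ + Real.exp (-θ)) ^ n) :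
    2 ^ n * (p ^ k * (1 - p) ^ (n - k)) ≤ d * (p / (1-p)) := by
  have hq : 0 < 1 - p := by linarith
  set r := p / (1-p) with hr
  have hr1 : 1 ≤ r := by rw [hr, le_div_iff₀ hq]; linarith
  have hr0 : 0 < r := by linarith
  set θ := Real.log r / 2 with hθ
  have hθ0 : 0 ≤ θ := by have := Real.log_nonneg hr1; positivity
  have h := H θ hθ0
  have e1 : Real.exp θ * Real.exp θ = r := by
    rw [← Real.exp_add, hθ, add_halves, Real.exp_log hr0]
  have e2 : (Real.exp θ + Real.exp (-θ)) * Real.exp θ = 1 / (1-p) := by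
    rw [add_mul, e1, ← Real.exp_add, neg_add_cancel, Real.exp_zero, hr]
    field_simp; ring
  have h2 : 2 ^ n * (Real.exp (θ * (n * (2 * p - 1))) * Real.exp θ ^ n * r) ≤
      d * (1 / (1-p)) ^ n * r := by
    rw [← e2, mul_pow]
    have : 0 ≤ Real.exp θ ^ n * r := by positivity
    nlinarith [mul_le_mul_of_nonneg_right h this]
  have h3 : r ^ k ≤ Real.exp (θ * (n * (2 * p - 1))) * Real.exp θ ^ n * r := by
    have a1 : r ^ k = Real.exp (k * (2 * θ)) := by
      rw [Real.exp_nat_mul, two_mul, Real.exp_add, e1]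
    have a2 : r = Real.exp (2 * θ) := by rw [two_mul, Real.exp_add, e1]
    rw [a1]
    refine le_trans ?_ (le_of_eq (congrArg (fun u => Real.exp (θ * (n * (2 * p - 1))) *
      Real.exp θ ^ n * u) a2.symm))
    rw [← Real.exp_nat_mul, ← Real.exp_add, ← Real.exp_add]
    apply Real.exp_le_exp.2
    nlinarith
  have h4 : 2 ^ n * r ^ k ≤ d * (1 / (1-p)) ^ n * r :=
    (mul_le_mul_of_nonneg_left h3 (by positivity)).trans h2
  have h5 := mul_le_mul_of_nonneg_right h4 (by positivity : 0 ≤ (1-p) ^ n)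
  have e5 : d * (1 / (1-p)) ^ n * r * (1-p)^n = d * r := by
    rw [div_pow, one_pow]; field_simp
  have e6 : r ^ k * (1-p) ^ n = p ^ k * (1-p) ^ (n-k) := by
    have : (1-p)^n = (1-p)^k * (1-p)^(n-k) := by rw [← pow_add]; congr 1; omega
    rw [this, hr, div_pow]; field_simp
  rw [e5, mul_assoc, e6] at h5
  exact h5

lemma choose_bound0 (n k : ℕ) (p d : ℝ) (hn : 2 ≤ n) (hd : 0 ≤ d) (hp : 1/2 ≤ p)
    (hp1 : p ≤ 1 - 1 / n) (hk : k ≤ n) (hk1 : n * p ≤ k)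
    (hk2 : k < n * p + 1)
    (H : ∀ θ : ℝ, 0 ≤ θ →
      2 ^ n * Real.exp (θ * (n * (2 * p - 1))) ≤ d * (Real.exp θ + Real.exp (-θ)) ^ n) :
    (2:ℝ) ^ n ≤ n.choose k * (2 * n ^ 3) * d := by
  have hn' : (2:ℝ) ≤ n := by exact_mod_cast hn
  have hinv : 0 < 1 / (n:ℝ) := by positivity
  have hp2 : p < 1 := by linarith
  have hq : 0 < 1 - p := by linarith
  have a := peak n k p (by omega) hp hp2 hk hk1 hk2
  have b := dim_bound n k p d hp hp2 hk hk2 H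
  have hr : p / (1-p) ≤ n := by
    rw [div_le_iff₀ hq]
    have : 1 ≤ n * (1-p) := by
      have := mul_le_mul_of_nonneg_left (show 1 / (n:ℝ) ≤ 1 - p by linarith) (show (0:ℝ) ≤ n by positivity)
      rwa [mul_one_div_cancel (by positivity)] at this
    linarith
  have c : 2 ^ n * (p ^ k * (1 - p) ^ (n - k)) ≤ d * n :=
    b.trans (mul_le_mul_of_nonneg_left hr hd)
  unfold tt at a
  calc (2:ℝ)^n ≤ 2^n * (n * (n+1) * (n.choose k * p ^ k * (1-p)^(n-k))) := by
        apply le_mul_of_one_le_right (by positivity) a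
    _ = (n * (n+1) * n.choose k) * (2 ^ n * (p ^ k * (1 - p) ^ (n - k))) := by ring
    _ ≤ (n * (n+1) * n.choose k) * (d * n) := by gcongr
    _ = n.choose k * d * n^2 * (n+1) := by ring
    _ ≤ n.choose k * d * n^2 * (2 * n) := by gcongr; linarith
    _ = _ := by ring

lemma choose_bound (n : ℕ) (p d : ℝ) (hn : 2 ≤ n) (hd : 0 ≤ d) (hp : 1/2 ≤ p) (hp1 : p ≤ 1)
    (H : ∀ θ : ℝ, 0 ≤ θ →
      2 ^ n * Real.exp (θ * (n * (2 * p - 1))) ≤ d * (Real.exp θ + Real.exp (-θ)) ^ n) :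
    ∃ k : ℕ, k ≤ n ∧ n * p ≤ k ∧ (2:ℝ) ^ n ≤ n.choose k * (2 * n ^ 4) * d := by
  have hn' : (2:ℝ) ≤ n := by exact_mod_cast hn
  rcases le_or_gt p (1 - 1 / n) with h | h
  · refine ⟨⌈n * p⌉₊, ?_, Nat.le_ceil _, ?_⟩
    · apply Nat.ceil_le.2; nlinarith
    · refine (choose_bound0 n _ p d hn hd hp h ?_ (Nat.le_ceil _)
        (Nat.ceil_lt_add_one (by positivity)) H).trans ?_
      · apply Nat.ceil_le.2; nlinarith
      · gcongr <;> first | linarith | norm_num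
  · refine ⟨n, le_rfl, by nlinarith, ?_⟩
    have e : n * (1 - 1 / (n:ℝ)) = n - 1 := by field_simp
    have := choose_bound0 n (n-1) (1 - 1/n) d hn hd (by
      have : 1 / (n:ℝ) ≤ 1 / 2 := one_div_le_one_div_of_le (by norm_num) hn'
      linarith) le_rfl (by omega)
      (by rw [e, Nat.cast_sub (by omega)]; simp) (by rw [e, Nat.cast_sub (by omega)]; simp)
      (fun θ hθ => le_trans (by gcongr) (H θ hθ))
    refine this.trans (le_of_eq ?_)
    have : n.choose (n-1) = n := by
      rw [Nat.choose_symm (by omega : 1 ≤ n)]; simp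
    rw [this, Nat.choose_self]; push_cast; ring

end bin

section code

noncomputable def YY {n : ℕ} (k : ℕ) (η : ℝ) (i : Fin n) (s : Finset (Fin n)) : ℝ :=
  if s.card = k then (if i ∈ s then 0 else 1) - (1 - (k:ℝ) / n) - η else 0

def agr {n : ℕ} (x : Fin n → Bool) : (Fin n → Bool) ≃ Finset (Fin n) where
  toFun z := Finset.univ.filter fun j => z j = x j
  invFun s := fun j => if j ∈ s then x j else !x j
  left_inv z := by
    funext j
    simp only [Finset.mem_filter, Finset.mem_univ, true_and]
    cases z j <;> cases x j <;> simp
  right_inv s := by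
    ext j
    simp only [Finset.mem_filter, Finset.mem_univ, true_and]
    by_cases h : j ∈ s <;> simp [h]

lemma YY_mgf {n : ℕ} (hn : 1 ≤ n) (k : ℕ) (hk : k ≤ n) (η : ℝ) (h0 : 0 < η) (h1 : η < 1) (i : Fin n) :
    ∑ s : Finset (Fin n), Real.exp (η / 8 * YY k η i s) ≤ 2 ^ n - n.choose k * (η ^ 2 / 16) := by
  have hn0 : (0:ℝ) < n := by exact_mod_cast hn
  have hkn : (k:ℝ) / n ≤ 1 := by rw [div_le_one hn0]; exact_mod_cast hk
  have hkn0 : 0 ≤ (k:ℝ) / n := by positivity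
  have pt : ∀ s : Finset (Fin n), Real.exp (η / 8 * YY k η i s) ≤
      1 + η / 8 * (if s.card = k ∧ i ∉ s then 1 else 0)
        - (if s.card = k then 1 else 0) * (η / 8 * (1 - (k:ℝ)/n) + η^2/16) := by
    intro s
    unfold YY
    by_cases hs : s.card = k
    · simp only [hs, if_true, true_and]
      set y : ℝ := (if i ∈ s then 0 else 1) - (1 - (k:ℝ) / n) - η with hy
      have hB : (if i ∉ s then (1:ℝ) else 0) = (if i ∈ s then 0 else 1) := by
        by_cases h : i ∈ s <;> simp [h]
      rw [hB]
      have hy2 : |y| ≤ 2 := by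
        rw [abs_le, hy]
        by_cases h : i ∈ s <;> simp only [h, if_true, if_false] <;> constructor <;> linarith
      have hyy : |η / 8 * y| ≤ η / 4 := by
        rw [abs_mul, abs_of_pos (by positivity : 0 < η/8)]; nlinarith
      have h3 := Real.abs_exp_sub_one_sub_id_le (x := η / 8 * y) (by linarith)
      have h4 : (η / 8 * y)^2 ≤ (η/4)^2 := by
        rw [← sq_abs]; gcongr
      have h5 := (abs_le.1 h3).2
      have : η / 8 * y = η / 8 * (if i ∈ s then 0 else 1) - η/8 * (1 - (k:ℝ) / n) - η^2/8 := by
        rw [hy]; ring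
      nlinarith
    · simp [hs]
  have c1 : ∑ s : Finset (Fin n), (if s.card = k then (1:ℝ) else 0) = n.choose k := by
    rw [Finset.sum_boole]
    have : (Finset.univ.filter fun s : Finset (Fin n) => s.card = k) =
        Finset.powersetCard k Finset.univ := by
      ext s; simp [Finset.mem_powersetCard]
    rw [this, Finset.card_powersetCard]; simp
  have c2 : ∑ s : Finset (Fin n), (if s.card = k ∧ i ∉ s then (1:ℝ) else 0) =
      n.choose k * (1 - (k:ℝ)/n) := by
    rw [Finset.sum_boole]
    have : (Finset.univ.filter fun s : Finset (Fin n) => s.card = k ∧ i ∉ s) =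
        Finset.powersetCard k (Finset.univ.erase i) := by
      ext s
      simp [Finset.mem_powersetCard, Finset.subset_erase, and_comm]
    rw [this, Finset.card_powersetCard, Finset.card_erase_of_mem (Finset.mem_univ _),
      Finset.card_univ, Fintype.card_fin]
    obtain ⟨m, rfl⟩ : ∃ m, n = m + 1 := ⟨n - 1, by omega⟩
    have h := Nat.choose_mul_succ_eq m k
    have h' : (m.choose k : ℝ) * ((m+1 : ℕ):ℝ) = (m+1).choose k * (((m+1 : ℕ):ℝ) - k) := by
      rw [← Nat.cast_sub hk]; exact_mod_cast h
    simp only [Nat.add_sub_cancel]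
    field_simp
    linarith
  have hs := Finset.sum_le_sum fun s (_ : s ∈ Finset.univ) => pt s
  refine hs.trans (le_of_eq ?_)
  rw [Finset.sum_sub_distrib, Finset.sum_add_distrib, ← Finset.mul_sum, ← Finset.sum_mul, c1, c2]
  simp
  ring

lemma exists_code {n : ℕ} (hn : 1 ≤ n) (k : ℕ) (hk : k ≤ n) (η : ℝ) (h0 : 0 < η) (h1 : η < 1)
    (T : Type) [Fintype T] [DecidableEq T]
    (hT : 2 * n * 2 ^ n ≤ (Fintype.card T : ℝ) * n.choose k * (η ^ 2 / 16)) :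
    ∃ c : T → Fin n → Bool, ∀ x i, ∑ t, YY k η i (agr x (c t)) < 0 := by
  set N := Fintype.card T with hN
  have hn0 : (0:ℝ) < n := by exact_mod_cast hn
  have each : ∀ (x : Fin n → Bool) (i : Fin n),
      ∑ c : T → Fin n → Bool, Real.exp (η / 8 * ∑ t, YY k η i (agr x (c t))) ≤
        (2 ^ n) ^ N * Real.exp (-(2 * n)) := by
    intro x i
    have := Finset.prod_univ_sum (fun _ : T => (Finset.univ : Finset (Fin n → Bool)))
      (fun _ z => Real.exp (η / 8 * YY k η i (agr x z)))
    rw [Fintype.piFinset_univ] at this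
    simp only [Finset.mul_sum, Real.exp_sum]
    rw [← this, Finset.prod_const, Finset.card_univ, ← hN,
      (agr x).sum_comp (fun s => Real.exp (η / 8 * YY k η i s))]
    have h2 : ∑ s : Finset (Fin n), Real.exp (η / 8 * YY k η i s) ≤
        2 ^ n * Real.exp (-(n.choose k * (η ^ 2 / 16) / 2 ^ n)) := by
      refine (YY_mgf hn k hk η h0 h1 i).trans ?_
      have := Real.add_one_le_exp (-(n.choose k * (η ^ 2 / 16) / 2 ^ n))
      have := mul_le_mul_of_nonneg_left this (by positivity : (0:ℝ) ≤ 2 ^ n)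
      refine le_trans (le_of_eq ?_) this
      field_simp
      ring
    have h3 : 0 ≤ ∑ s : Finset (Fin n), Real.exp (η / 8 * YY k η i s) :=
      Finset.sum_nonneg fun _ _ => (Real.exp_pos _).le
    refine (pow_le_pow_left₀ h3 h2 N).trans ?_
    rw [mul_pow, ← Real.exp_nat_mul]
    gcongr
    rw [mul_neg, neg_le_neg_iff, ← mul_div_assoc, le_div_iff₀ (by positivity)]
    linarith
  have tot : ∑ c : T → Fin n → Bool, ∑ xi : (Fin n → Bool) × Fin n,
      Real.exp (η / 8 * ∑ t, YY k η xi.2 (agr xi.1 (c t))) < ∑ c : T → Fin n → Bool, (1:ℝ) := by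
    rw [Finset.sum_comm]
    refine (Finset.sum_le_sum fun xi _ => each xi.1 xi.2).trans_lt ?_
    simp only [Finset.sum_const, Finset.card_univ, Fintype.card_prod, Fintype.card_pi,
      Finset.prod_const, Fintype.card_bool, Fintype.card_fin, nsmul_eq_mul, ← hN]
    push_cast
    have e1 : (n:ℝ) < 2 ^ n := by exact_mod_cast Nat.lt_two_pow_self
    have e2 : (2:ℝ) ^ n ≤ Real.exp n := by
      have := Real.add_one_le_exp (1:ℝ)
      have : (2:ℝ) ≤ Real.exp 1 := by linarith
      calc (2:ℝ)^n ≤ (Real.exp 1)^n := by gcongr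
        _ = _ := by rw [← Real.exp_nat_mul, mul_one]
    have e3 : (2:ℝ) ^ n * n * Real.exp (-(2*n)) < 1 := by
      have : Real.exp n * Real.exp n * Real.exp (-(2*n)) = 1 := by
        rw [← Real.exp_add, ← Real.exp_add, ← Real.exp_zero]; congr 1; ring
      rw [← this]
      apply mul_lt_mul_of_pos_right _ (Real.exp_pos _)
      exact mul_lt_mul' e2 (e1.trans_le e2) (by positivity) (Real.exp_pos _)
    have e4 : (0:ℝ) < (2^n)^N := by positivity
    nlinarith
  obtain ⟨c, -, hc⟩ := Finset.exists_lt_of_sum_lt tot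
  refine ⟨c, fun x i => ?_⟩
  have h5 : Real.exp (η / 8 * ∑ t, YY k η i (agr x (c t))) < 1 :=
    (Finset.single_le_sum (f := fun xi : (Fin n → Bool) × Fin n =>
      Real.exp (η / 8 * ∑ t, YY k η xi.2 (agr xi.1 (c t)))) (fun _ _ => (Real.exp_pos _).le)
      (Finset.mem_univ (x, i))).trans_lt hc
  rw [Real.exp_lt_one_iff] at h5
  by_contra! h6
  have : 0 ≤ η / 8 * ∑ t, YY k η i (agr x (c t)) := by positivity
  linarith

lemma exists_rac {n : ℕ} (hn : 1 ≤ n) (k : ℕ) (hk : k ≤ n) (η : ℝ) (h0 : 0 < η) (h1 : η < 1)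
    (T : Type) [Fintype T] [DecidableEq T]
    (hT : 2 * n * 2 ^ n ≤ (Fintype.card T : ℝ) * n.choose k * (η ^ 2 / 16)) :
    ∃ (Enc : (Fin n → Bool) → T → ℝ) (g : Fin n → T → Bool → ℝ),
            (∀ x, (∀ z, 0 ≤ Enc x z) ∧ ∑ z, Enc x z = 1) ∧
            (∀ i z, (∀ b, 0 ≤ g i z b) ∧ g i z false + g i z true = 1) ∧
            ∀ (x : Fin n → Bool) (i : Fin n),
              (k:ℝ) / n - η ≤ ∑ z, Enc x z * g i z (x i) := by
  obtain ⟨c, hc⟩ := exists_code hn k hk η h0 h1 T hT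
  have hn0 : (0:ℝ) < n := by exact_mod_cast hn
  have hkn : (k:ℝ) / n ≤ 1 := by rw [div_le_one hn0]; exact_mod_cast hk
  let w : (Fin n → Bool) → T → ℝ := fun x t => if (agr x (c t)).card = k then 1 else 0
  have hw : ∀ x t, 0 ≤ w x t := by intro x t; simp only [w]; split_ifs <;> norm_num
  let a : (Fin n → Bool) → ℝ := fun x => ∑ t, w x t
  let g : Fin n → T → Bool → ℝ := fun i t b => if c t i = b then 1 else 0
  have key : ∀ x i, ∑ t, YY k η i (agr x (c t)) =
      a x * ((k:ℝ)/n - η) - ∑ t, w x t * g i t (x i) := by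
    intro x i
    simp only [a]
    rw [Finset.sum_mul, ← Finset.sum_sub_distrib]
    refine Finset.sum_congr rfl fun t _ => ?_
    have hm : (i ∈ agr x (c t)) ↔ c t i = x i := by simp [agr]
    simp only [YY, w, g, hm]
    by_cases h : (agr x (c t)).card = k <;> by_cases h' : c t i = x i <;> simp [h, h'] <;> ring
  have ha : ∀ x, 0 < a x := by
    intro x
    have i : Fin n := ⟨0, hn⟩
    by_contra! hcon
    have ha0 : a x = 0 := le_antisymm hcon (Finset.sum_nonneg fun t _ => hw x t)
    have hz : ∀ t, w x t = 0 := by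
      intro t
      exact (Finset.sum_eq_zero_iff_of_nonneg fun t _ => hw x t).1 ha0 t (Finset.mem_univ _)
    have := hc x i
    rw [key, ha0] at this
    simp [hz] at this
  refine ⟨fun x t => w x t / a x, g, ?_, ?_, ?_⟩
  · intro x
    refine ⟨fun z => div_nonneg (hw x z) (ha x).le, ?_⟩
    rw [← Finset.sum_div]
    exact div_self (ha x).ne'
  · intro i z
    refine ⟨fun b => by simp only [g]; split_ifs <;> norm_num, ?_⟩
    simp only [g]
    cases c z i <;> simp
  · intro x i
    have := hc x i
    rw [key] at this
    have e : ∑ z, w x z / a x * g i z (x i) = (∑ t, w x t * g i t (x i)) / a x := by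
      rw [Finset.sum_div]
      refine Finset.sum_congr rfl fun t _ => ?_
      ring
    rw [e, le_div_iff₀ (ha x)]
    linarith

end code
end QR

/-- There is a universal constant `C > 0` such that for all `n ≥ 2`, `m ≥ 1`,
`p ∈ [1/2,1]` and `η ∈ (0,1)`: if an (n,m,p)-QRAC exists, then an
(n, m', 1 − 2p(1−p) − η)-classical RAC exists for some
`m' ≤ m + C·(log₂ n + log₂(1/η))`. -/
theorem qrac_to_rac :
    ∃ C : ℝ, 0 < C ∧
      ∀ (n m : ℕ) (p η : ℝ), 2 ≤ n → 1 ≤ m → 1 / 2 ≤ p → p ≤ 1 → 0 < η → η < 1 →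
        (∃ ρ : (Fin n → Bool) → Matrix (Fin (2 ^ m)) (Fin (2 ^ m)) ℂ,
          (∀ x, (ρ x).PosSemidef ∧ (ρ x).trace = 1) ∧
          ∀ i : Fin n, ∃ M : Bool → Matrix (Fin (2 ^ m)) (Fin (2 ^ m)) ℂ,
            (∀ b, (M b).PosSemidef) ∧ M false + M true = 1 ∧
            ∀ (x : Fin n → Bool) (b : Bool), x i = b → p ≤ ((M b * ρ x).trace).re) →
        ∃ m' : ℕ, (m' : ℝ) ≤ (m : ℝ) + C * (Real.logb 2 n + Real.logb 2 (1 / η)) ∧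
          ∃ (Enc : (Fin n → Bool) → (Fin m' → Bool) → ℝ)
            (g : Fin n → (Fin m' → Bool) → Bool → ℝ),
            (∀ x, (∀ z, 0 ≤ Enc x z) ∧ ∑ z, Enc x z = 1) ∧
            (∀ i z, (∀ b, 0 ≤ g i z b) ∧ g i z false + g i z true = 1) ∧
            ∀ (x : Fin n → Bool) (i : Fin n),
              1 - 2 * p * (1 - p) - η ≤ ∑ z, Enc x z * g i z (x i) := by
  refine ⟨12, by norm_num, ?_⟩
  intro n m p η hn hm hp hp1 h0 h1 hQ
  obtain ⟨ρ, hρ, hM⟩ := hQ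
  have hn' : (2:ℝ) ≤ n := by exact_mod_cast hn
  obtain ⟨k, hk, hkp, hb⟩ := QR.choose_bound n p ((2 ^ m : ℕ) : ℝ) hn (by positivity) hp hp1
    (fun θ hθ => QR.nayak p ρ hρ hM θ hθ)
  push_cast at hb
  set L : ℝ := 64 * n ^ 5 / η ^ 2 with hL
  have hL0 : 0 < L := by positivity
  have hlogL : Real.logb 2 L = 6 + 5 * Real.logb 2 n + 2 * Real.logb 2 (1 / η) := by
    have e : L = 2 ^ 6 * (n:ℝ) ^ 5 * (1 / η) ^ 2 := by rw [hL]; field_simp; norm_num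
    rw [e, Real.logb_mul (by positivity) (by positivity), Real.logb_mul (by positivity)
      (by positivity), Real.logb_pow, Real.logb_pow, Real.logb_pow,
      Real.logb_self_eq_one (by norm_num)]
    norm_num
  have hl1 : 1 ≤ Real.logb 2 n := by
    rw [Real.le_logb_iff_rpow_le (by norm_num) (by positivity)]; simpa using hn'
  have hl2 : 0 ≤ Real.logb 2 (1 / η) :=
    Real.logb_nonneg (by norm_num) (by rw [le_div_iff₀ h0]; linarith)
  have hL1 : L ≤ 2 ^ ⌈Real.logb 2 L⌉₊ := by
    have := Nat.le_ceil (Real.logb 2 L)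
    rw [Real.logb_le_iff_le_rpow (by norm_num) hL0] at this
    rwa [Real.rpow_natCast] at this
  refine ⟨m + ⌈Real.logb 2 L⌉₊, ?_, ?_⟩
  · have := Nat.ceil_lt_add_one (show 0 ≤ Real.logb 2 L by rw [hlogL]; linarith)
    push_cast
    rw [hlogL] at this ⊢
    linarith
  · obtain ⟨Enc, g, a1, a2, a3⟩ := QR.exists_rac (by omega : 1 ≤ n) k hk η h0 h1
      (Fin (m + ⌈Real.logb 2 L⌉₊) → Bool) (by
        rw [Fintype.card_fun, Fintype.card_bool, Fintype.card_fin]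
        push_cast
        rw [pow_add]
        calc (2:ℝ) * n * 2 ^ n ≤ 2 * n * (n.choose k * (2 * n ^ 4) * 2 ^ m) := by gcongr
          _ = 2 ^ m * L * n.choose k * (η ^ 2 / 16) := by rw [hL]; field_simp; ring
          _ ≤ _ := by gcongr)
    refine ⟨Enc, g, a1, a2, fun x i => le_trans ?_ (a3 x i)⟩
    have : p ≤ (k:ℝ) / n := by rw [le_div_iff₀ (by positivity)]; linarith
    nlinarith
end

section
/- Let X and Y be finite nonempty sets, let E : X → (probability distributions on Y) be a classical channel, and suppose σ is a probability distribution on Y and c ≥ 0 is a real number such that E(x)(y) ≤ 2^c · σ(y) for all x ∈ X and y ∈ Y. Then for every η ∈ (0,1) there exist a finite nonempty set R with a probability distribution μ on R (the shared randomness), a natural number N ≤ ⌈2^c · ln(1/η)⌉ + 1, a message function M : X × R → {1,…,N}, and an output function g : {1,…,N} × R → Y, such that for every x ∈ X the total variation distance between the distribution of g(M(x,r), r) when r ∼ μ and the distribution E(x) is at most η. -/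
open BigOperators

/-- Independent coins: the marginal at `x0`. -/
lemma coin_marginal {X : Type*} [Fintype X] [DecidableEq X] (p : X → ℝ) (x0 : X) :
    ∑ a : X → Bool, (∏ x, (if a x then p x else 1 - p x)) * (if a x0 then (1 : ℝ) else 0)
      = p x0 := by
  have h1 : ∀ a : X → Bool,
      (∏ x, (if a x then p x else 1 - p x)) * (if a x0 then (1 : ℝ) else 0)
        = ∏ x, ((if a x then p x else 1 - p x) *
            (if x = x0 then (if a x then (1 : ℝ) else 0) else 1)) := by
    intro a
    rw [Finset.prod_mul_distrib]
    congr 1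
    rw [Finset.prod_ite_eq' Finset.univ x0 (fun x => if a x then (1 : ℝ) else 0)]
    simp
  rw [Finset.sum_congr rfl (fun a _ => h1 a)]
  have h2 := Fintype.prod_sum (fun (x : X) (b : Bool) => (if b then p x else 1 - p x) *
            (if x = x0 then (if b then (1 : ℝ) else 0) else 1))
  rw [← h2]
  rw [Finset.prod_eq_single x0]
  · simp
  · intro b _ hb
    simp [hb]
  · simp

lemma coin_total {X : Type*} [Fintype X] [DecidableEq X] (p : X → ℝ) :
    ∑ a : X → Bool, (∏ x, (if a x then p x else 1 - p x)) = 1 := by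
  have h2 := Fintype.prod_sum (fun (x : X) (b : Bool) => (if b then p x else 1 - p x))
  rw [← h2]
  simp

lemma single_round {X Y : Type*} [Fintype X] [Fintype Y] [DecidableEq Y]
    (E : X → Y → ℝ) (hE : ∀ x, (∀ y, 0 ≤ E x y) ∧ ∑ y, E x y = 1)
    (σ : Y → ℝ) (hσ0 : ∀ y, 0 ≤ σ y) (hσ1 : ∑ y, σ y = 1)
    (q : ℝ) (hq : 0 ≤ q) (hdom : ∀ x y, q * E x y ≤ σ y) :
    ∃ (m : ℕ) (ν : Fin m → ℝ) (f : Fin m → Y) (A : X → Fin m → Bool),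
      (∀ s, 0 ≤ ν s) ∧ ∑ s, ν s = 1 ∧
      ∀ x y, ∑ s, ν s * (if A x s then (if f s = y then (1 : ℝ) else 0) else 0) = q * E x y := by
  classical
  let p : Y → X → ℝ := fun y x => q * E x y / σ y
  have hp0 : ∀ y x, 0 ≤ p y x := fun y x => div_nonneg (mul_nonneg hq ((hE x).1 y)) (hσ0 y)
  have hp1 : ∀ y x, p y x ≤ 1 := fun y x => div_le_one_of_le₀ (hdom x y) (hσ0 y)
  have hps : ∀ y x, σ y * p y x = q * E x y := by
    intro y x
    by_cases h : σ y = 0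
    · have h1 := hdom x y
      have h2 := mul_nonneg hq ((hE x).1 y)
      rw [h] at h1 ⊢
      linarith
    · simp only [p]
      field_simp
  let e := Fintype.equivFin (Y × (X → Bool))
  let w : Y × (X → Bool) → ℝ := fun s => σ s.1 * ∏ x, (if s.2 x then p s.1 x else 1 - p s.1 x)
  refine ⟨_, fun i => w (e.symm i), fun i => (e.symm i).1, fun x i => (e.symm i).2 x, ?_, ?_, ?_⟩
  · intro s
    refine mul_nonneg (hσ0 _) (Finset.prod_nonneg fun x _ => ?_)
    split_ifs
    · exact hp0 _ _
    · linarith [hp1 (e.symm s).1 x]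
  · rw [e.symm.sum_comp w, Fintype.sum_prod_type]
    simp only [w]
    refine Eq.trans ?_ hσ1
    refine Finset.sum_congr rfl fun y _ => ?_
    rw [← Finset.mul_sum, coin_total, mul_one]
  · intro x y
    rw [e.symm.sum_comp (fun s => w s * (if s.2 x then (if s.1 = y then (1 : ℝ) else 0) else 0)),
      Fintype.sum_prod_type, Finset.sum_eq_single y]
    · simp only [w, if_true, mul_assoc]
      rw [← Finset.mul_sum, coin_marginal, hps]
    · intro b _ hb
      simp [hb]
    · simp

lemma many_rounds {X Y : Type*} [Fintype X] [Fintype Y] [Nonempty Y] [DecidableEq Y]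
    (E : X → Y → ℝ) (hE : ∀ x, (∀ y, 0 ≤ E x y) ∧ ∑ y, E x y = 1)
    (q : ℝ) (m : ℕ) (ν : Fin m → ℝ) (f : Fin m → Y) (A : X → Fin m → Bool)
    (hν0 : ∀ s, 0 ≤ ν s) (hν1 : ∑ s, ν s = 1)
    (hA : ∀ x y, ∑ s, ν s * (if A x s then (if f s = y then (1 : ℝ) else 0) else 0) = q * E x y)
    (y0 : Y) (n : ℕ) :
    ∃ (R : Type) (_ : Fintype R) (μ : R → ℝ) (M : X → R → Fin (n + 1)) (g : Fin (n + 1) → R → Y),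
      (∀ r, 0 ≤ μ r) ∧ ∑ r, μ r = 1 ∧
      ∀ x y, ∑ r, μ r * (if g (M x r) r = y then (1 : ℝ) else 0)
        = (1 - (1 - q) ^ n) * E x y + (1 - q) ^ n * (if y0 = y then 1 else 0) := by
  induction n with
  | zero =>
    exact ⟨Unit, inferInstance, fun _ => 1, fun _ _ => 0, fun _ _ => y0, by simp, by simp, by simp⟩
  | succ n ih =>
    obtain ⟨R, _, μ, M, g, hμ0, hμ1, h⟩ := ih
    have hrej : ∀ x, ∑ s, ν s * (if A x s then (0 : ℝ) else 1) = 1 - q := by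
      intro x
      have h1 : ∑ s, ν s * (if A x s then (1 : ℝ) else 0) = q := by
        have := Finset.sum_congr (rfl : (Finset.univ : Finset Y) = _) (fun y _ => hA x y)
        rw [← Finset.mul_sum, (hE x).2, mul_one, Finset.sum_comm] at this
        rw [← this]
        refine Finset.sum_congr rfl fun s _ => ?_
        rw [← Finset.mul_sum]
        congr 1
        split_ifs <;> simp
      rw [← hν1, ← h1, ← Finset.sum_sub_distrib]
      refine Finset.sum_congr rfl fun s _ => ?_
      split_ifs <;> simp [hν1]
    refine ⟨Fin m × R, inferInstance, fun s => ν s.1 * μ s.2,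
      fun x s => if A x s.1 then 0 else (M x s.2).succ,
      fun i s => Fin.cases (f s.1) (fun j => g j s.2) i, ?_, ?_, ?_⟩
    · exact fun s => mul_nonneg (hν0 _) (hμ0 _)
    · rw [Fintype.sum_prod_type]
      simp only [← Finset.mul_sum, hμ1, mul_one, hν1]
    · intro x y
      rw [Fintype.sum_prod_type]
      have key : ∀ s : Fin m, (∑ r, ν s * μ r * (if (Fin.cases (f s) (fun j => g j r)
            (if A x s then 0 else (M x r).succ) : Y) = y then (1 : ℝ) else 0))
          = ν s * (if A x s then (if f s = y then (1 : ℝ) else 0) else 0)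
            + ν s * (if A x s then (0 : ℝ) else 1) *
              ((1 - (1 - q) ^ n) * E x y + (1 - q) ^ n * (if y0 = y then 1 else 0)) := by
        intro s
        rw [← h x y]
        cases hs : A x s
        · simp [mul_assoc, Finset.mul_sum]
        · simp only [if_true, Fin.cases_zero]
          rw [← Finset.sum_mul, ← Finset.mul_sum, hμ1]
          simp
      refine (Finset.sum_congr rfl fun s _ => key s).trans ?_
      rw [Finset.sum_add_distrib, hA, ← Finset.sum_mul, hrej]
      ring

/-- Compression of a classical channel by rejection sampling. If
`E(x)(y) ≤ 2^c·σ(y)` for all `x, y` (i.e. `D_max(E(x)‖σ) ≤ c` for all `x`), then for every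
`η ∈ (0,1)` there are shared randomness `(R, μ)` (a finite nonempty set, modelled as `Fin K`
with `K ≥ 1`), a number `N ≤ ⌈2^c · ln(1/η)⌉ + 1` of possible messages, a message function
`M : X × R → {1,…,N}` and an output function `g : {1,…,N} × R → Y` such that for every `x` the
total variation distance between the distribution of `g(M(x,r), r)` for `r ∼ μ` and `E(x)` is
at most `η`. -/
theorem channel_compression {X Y : Type*} [Fintype X] [Nonempty X] [Fintype Y] [Nonempty Y]
    [DecidableEq Y]
    (E : X → Y → ℝ) (hE : ∀ x, (∀ y, 0 ≤ E x y) ∧ ∑ y, E x y = 1)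
    (σ : Y → ℝ) (hσ0 : ∀ y, 0 ≤ σ y) (hσ1 : ∑ y, σ y = 1)
    (c : ℝ) (hc : 0 ≤ c) (hdom : ∀ x y, E x y ≤ 2 ^ c * σ y)
    (η : ℝ) (hη0 : 0 < η) (hη1 : η < 1) :
    ∃ (K : ℕ), 0 < K ∧
      ∃ μ : Fin K → ℝ, (∀ r, 0 ≤ μ r) ∧ (∑ r, μ r = 1) ∧
        ∃ (N : ℕ) (M : X → Fin K → Fin N) (g : Fin N → Fin K → Y),
          N ≤ ⌈(2 : ℝ) ^ c * Real.log (1 / η)⌉₊ + 1 ∧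
          ∀ x, (1 / 2) * ∑ y,
              |(∑ r, μ r * (if g (M x r) r = y then (1 : ℝ) else 0)) - E x y| ≤ η := by
  classical
  obtain ⟨y0⟩ := ‹Nonempty Y›
  haveI : Nonempty Y := ⟨y0⟩
  have hC : (0 : ℝ) < 2 ^ c := Real.rpow_pos_of_pos (by norm_num) c
  have hC1 : (1 : ℝ) ≤ 2 ^ c := Real.one_le_rpow (by norm_num) hc
  set C : ℝ := 2 ^ c with hCdef
  have hq0 : 0 ≤ C⁻¹ := by positivity
  have hq1 : C⁻¹ ≤ 1 := inv_le_one_of_one_le₀ hC1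
  obtain ⟨m, ν, f, A, hν0, hν1, hA⟩ := single_round E hE σ hσ0 hσ1 C⁻¹ hq0 (by
    intro x y
    rw [inv_mul_le_iff₀ hC]
    exact hdom x y)
  set n := ⌈C * Real.log (1 / η)⌉₊ with hn
  obtain ⟨R, _, μ, M, g, hμ0, hμ1, h⟩ := many_rounds E hE C⁻¹ m ν f A hν0 hν1 hA y0 n
  have hδ0 : 0 ≤ (1 - C⁻¹) ^ n := pow_nonneg (by linarith) n
  have hδ : (1 - C⁻¹) ^ n ≤ η := by
    have h1 : (1 - C⁻¹) ^ n ≤ (Real.exp (-C⁻¹)) ^ n :=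
      pow_le_pow_left₀ (by linarith) (Real.one_sub_le_exp_neg _) n
    refine h1.trans ?_
    rw [← Real.exp_nat_mul, ← Real.le_log_iff_exp_le hη0]
    have h2 : C * Real.log (1 / η) ≤ n := Nat.le_ceil _
    rw [one_div, Real.log_inv] at h2
    have h3 : C⁻¹ * (C * -Real.log η) ≤ C⁻¹ * n := mul_le_mul_of_nonneg_left h2 hq0
    rw [inv_mul_cancel_left₀ hC.ne'] at h3
    linarith
  let e := Fintype.equivFin R
  have hR : Nonempty R := by
    by_contra hne
    rw [not_nonempty_iff] at hne
    simp at hμ1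
  refine ⟨Fintype.card R, Fintype.card_pos, fun i => μ (e.symm i), fun i => hμ0 _, ?_,
    n + 1, fun x i => M x (e.symm i), fun j i => g j (e.symm i), le_rfl, ?_⟩
  · rw [e.symm.sum_comp μ, hμ1]
  · intro x
    have h1 : ∀ y, |(∑ i, μ (e.symm i) *
        (if g (M x (e.symm i)) (e.symm i) = y then (1 : ℝ) else 0)) - E x y|
        ≤ (1 - C⁻¹) ^ n * (E x y + (if y0 = y then 1 else 0)) := by
      intro y
      rw [e.symm.sum_comp (fun r => μ r * (if g (M x r) r = y then (1 : ℝ) else 0)), h x y]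
      have h2 : (1 - (1 - C⁻¹) ^ n) * E x y + (1 - C⁻¹) ^ n * (if y0 = y then 1 else 0) - E x y
        = (1 - C⁻¹) ^ n * ((if y0 = y then 1 else 0) - E x y) := by ring
      rw [h2, abs_mul, abs_of_nonneg hδ0]
      refine mul_le_mul_of_nonneg_left ?_ hδ0
      have := (hE x).1 y
      rw [abs_le]
      split_ifs <;> constructor <;> linarith
    have h3 := Finset.sum_le_sum (s := Finset.univ) (fun y _ => h1 y)
    rw [← Finset.mul_sum, Finset.sum_add_distrib, (hE x).2] at h3
    simp only [Finset.sum_ite_eq, Finset.mem_univ, if_true] at h3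
    linarith
end

section
/- Let X and Y be finite nonempty sets, P a probability distribution on X, {ρ_x}_{x∈X} a family of density matrices on ℂ^d, and {Q_y}_{y∈Y} a POVM with outcome set Y on ℂ^d. Then there exists a probability distribution σ on Y such that for all x ∈ X and y ∈ Y: P(x)·Tr(Q_y ρ_x) ≤ d · P(x) · σ(y). (In other words, the max-information between the input and the measurement outcome of the joint distribution (x,y) ↦ P(x)·Tr(Q_y ρ_x) is at most log₂ d.) -/
open Matrix BigOperators ComplexOrder

open scoped MatrixOrder Matrix.Norms.L2Operator in
lemma aux_psd {d : ℕ} {Q : Matrix (Fin d) (Fin d) ℂ} (hQ : Q.PosSemidef) :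
    ∃ B : Matrix (Fin d) (Fin d) ℂ, Q = Bᴴ * B :=
  CStarAlgebra.nonneg_iff_eq_star_mul_self.mp hQ.nonneg

section
attribute [local instance] Matrix.frobeniusNormedAddCommGroup

lemma aux_frob {d : ℕ} (A : Matrix (Fin d) (Fin d) ℂ) :
    (A * Aᴴ).trace.re = ‖A‖ ^ 2 := by
  have h : (0:ℝ) ≤ ∑ i, ∑ j, ‖A i j‖ ^ (2:ℝ) := by positivity
  rw [Matrix.frobenius_norm_def, ← Real.sqrt_eq_rpow, Real.sq_sqrt h]
  simp only [Matrix.trace, Matrix.diag, Matrix.mul_apply, Complex.re_sum,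
    Matrix.conjTranspose_apply]
  refine Finset.sum_congr rfl fun i _ => Finset.sum_congr rfl fun j _ => ?_
  have : A i j * star (A i j) = ((‖A i j‖ ^ 2 : ℝ) : ℂ) := by
    rw [Complex.star_def, Complex.mul_conj, Complex.normSq_eq_norm_sq]
  rw [this, Complex.ofReal_re, Real.rpow_two]

lemma aux_tr {d : ℕ} (Q R : Matrix (Fin d) (Fin d) ℂ) (hQ : Q.PosSemidef)
    (hR : R.PosSemidef) : (Q * R).trace.re ≤ Q.trace.re * R.trace.re := by
  obtain ⟨B, rfl⟩ := aux_psd hQ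
  obtain ⟨C, rfl⟩ := aux_psd hR
  have h1 : (Bᴴ * B * (Cᴴ * C)).trace = ((B * Cᴴ) * (B * Cᴴ)ᴴ).trace := by
    rw [Matrix.conjTranspose_mul, Matrix.conjTranspose_conjTranspose, Matrix.mul_assoc,
      Matrix.trace_mul_comm]
    simp only [Matrix.mul_assoc]
  rw [h1, Matrix.trace_mul_comm Bᴴ B, aux_frob, aux_frob]
  have h2 := aux_frob Cᴴ
  rw [Matrix.conjTranspose_conjTranspose] at h2
  rw [h2, ← mul_pow]
  exact pow_le_pow_left₀ (norm_nonneg _) (Matrix.frobenius_norm_mul B Cᴴ) 2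

end

/-- STATEMENT 10: For a distribution `P` on `X`, density matrices `{ρ_x}` on `ℂ^d` and a POVM
`{Q_y}` with outcome set `Y`, there is a distribution `σ` on `Y` such that
`P(x)·Tr(Q_y ρ_x) ≤ d · P(x) · σ(y)` for all `x, y`; i.e. the max-information between input
and measurement outcome is at most `log₂ d`. -/
theorem measurement_max_information {d : ℕ} {X Y : Type*} [Fintype X] [Nonempty X]
    [Fintype Y] [Nonempty Y]
    (P : X → ℝ) (hP0 : ∀ x, 0 ≤ P x) (hP1 : ∑ x, P x = 1)
    (ρ : X → Matrix (Fin d) (Fin d) ℂ)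
    (hρ : ∀ x, (ρ x).PosSemidef ∧ (ρ x).trace = 1)
    (Q : Y → Matrix (Fin d) (Fin d) ℂ)
    (hQ : (∀ y, (Q y).PosSemidef) ∧ ∑ y, Q y = 1) :
    ∃ σ : Y → ℝ, (∀ y, 0 ≤ σ y) ∧ ∑ y, σ y = 1 ∧
      ∀ x y, P x * ((Q y * ρ x).trace).re ≤ (d : ℝ) * (P x * σ y) := by
  have hd : (d : ℝ) ≠ 0 := by
    obtain ⟨x⟩ := ‹Nonempty X›
    rintro h
    have h0 : d = 0 := by exact_mod_cast h
    subst h0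
    have := (hρ x).2
    simp [Matrix.trace] at this
  refine ⟨fun y => (Q y).trace.re / d, fun y => ?_, ?_, fun x y => ?_⟩
  · have := (Complex.le_def.mp (hQ.1 y).trace_nonneg).1
    simp only [Complex.zero_re] at this
    positivity
  · rw [← Finset.sum_div, ← Complex.re_sum, ← Matrix.trace_sum, hQ.2]
    simp [hd]
  · have h := aux_tr (Q y) (ρ x) (hQ.1 y) (hρ x).1
    rw [(hρ x).2, Complex.one_re, mul_one] at h
    have e : (d : ℝ) * (P x * ((Q y).trace.re / d)) = P x * (Q y).trace.re := by
      field_simp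
    show _ ≤ (d : ℝ) * (P x * ((Q y).trace.re / d))
    rw [e]
    exact mul_le_mul_of_nonneg_left h (hP0 x)
end

section
/- Let n ≥ 1, let x ↦ ρ_x map {0,1}^n to density matrices on ℂ^d, let {Q_y}_{y∈{0,1}^n} be a POVM on ℂ^d, and suppose the uniform-average Hamming-distance bound 2^{−n} · Σ_{x'∈{0,1}^n} Σ_{y'∈{0,1}^n} Tr(Q_{y'} ρ_{x'}) · d_H(x', y') ≤ ε·n holds for some ε ≥ 0. For a shift amount t ∈ {1,…,n} define SHIFT_t : {0,1}^n → {0,1}^n by (SHIFT_t(z))_i = z_{((i+t−1 mod n)+1)}. Then for every x ∈ {0,1}^n and every i ∈ [n]: (1/(n·2^n)) · Σ_{t=1}^{n} Σ_{r∈{0,1}^n} Σ_{y'∈{0,1}^n : (SHIFT_{−t}(y') ⊕ r)_i = x_i} Tr(Q_{y'} ρ_{SHIFT_t(x ⊕ r)}) ≥ 1 − ε, where ⊕ is bitwise XOR and SHIFT_{−t} is the inverse of SHIFT_t. -/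
open Matrix BigOperators ComplexOrder

lemma agree_sum (n : ℕ) [NeZero n] (i : Fin n) (z y : Fin n → Bool) (c : ℝ) :
    (∑ t : Fin n, if y (i - t) = z (i - t) then c else 0)
      = c * n - c * (hammingDist z y : ℝ) := by
  have h1 : (∑ t : Fin n, if y (i - t) = z (i - t) then c else 0)
      = ∑ j : Fin n, if y j = z j then c else 0 :=
    (Equiv.subLeft i).sum_comp (fun j => if y j = z j then c else 0)
  have h2 : (hammingDist z y : ℝ) = ∑ j : Fin n, if z j ≠ y j then (1 : ℝ) else 0 := by
    rw [hammingDist, Finset.sum_boole]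
  have h3 : c * (n : ℝ) = ∑ j : Fin n, c := by simp [mul_comm]
  rw [h1, h2, h3, Finset.mul_sum, ← Finset.sum_sub_distrib]
  refine Finset.sum_congr rfl fun j _ => ?_
  by_cases h : y j = z j
  · simp [h]
  · simp [h, Ne.symm h]

lemma shift_xor_sum (n : ℕ) [NeZero n] (x : Fin n → Bool) (t : Fin n)
    (g : (Fin n → Bool) → ℝ) :
    ∑ r : Fin n → Bool, g (fun j => xor (x (j + t)) (r (j + t))) = ∑ z, g z := by
  refine Fintype.sum_bijective (fun r : Fin n → Bool => fun j => xor (x (j + t)) (r (j + t)))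
    ?_ _ _ (fun _ => rfl)
  refine Function.bijective_iff_has_inverse.2 ⟨fun z j => xor (x j) (z (j - t)), ?_, ?_⟩
  · intro r; funext j; simp
  · intro r; funext j; simp

/-- STATEMENT 12: Symmetrization of an average-case Hamming-distance guarantee. Indices are
`Fin n` (0-indexed), so the cyclic shift `SHIFT_t` of the statement is
`(SHIFT_t z) i = z (i + t)` with addition in `Fin n`, its inverse being `z ↦ (i ↦ z (i - t))`;
the shift amounts `t ∈ {1,…,n}` correspond to the `n` elements of `Fin n`.
If the uniform-average Hamming-distance bound
`2^{−n}·Σ_{x'} Σ_{y'} Tr(Q_{y'} ρ_{x'})·d_H(x',y') ≤ ε·n` holds, then for every `x` and `i`,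
averaging over the shift `t` and the one-time pad `r`, the probability that the symmetrized
protocol's output bit `(SHIFT_{−t}(y') ⊕ r)_i` equals `x_i` is at least `1 − ε`. -/
theorem symmetrized_qrac_bit_success (n : ℕ) [NeZero n] (d : ℕ)
    (ρ : (Fin n → Bool) → Matrix (Fin d) (Fin d) ℂ)
    (hρ : ∀ x, (ρ x).PosSemidef ∧ (ρ x).trace = 1)
    (Q : (Fin n → Bool) → Matrix (Fin d) (Fin d) ℂ)
    (hQ : (∀ y, (Q y).PosSemidef) ∧ ∑ y, Q y = 1)
    (ε : ℝ) (hε : 0 ≤ ε)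
    (havg : (2 : ℝ) ^ (-(n : ℝ)) *
        ∑ x', ∑ y', ((Q y' * ρ x').trace).re * (hammingDist x' y' : ℝ) ≤ ε * n) :
    ∀ (x : Fin n → Bool) (i : Fin n),
      1 - ε ≤ (1 / ((n : ℝ) * 2 ^ n)) * ∑ t : Fin n, ∑ r : Fin n → Bool,
        ∑ y' : Fin n → Bool,
          (if xor (y' (i - t)) (r i) = x i
            then ((Q y' * ρ (fun j => xor (x (j + t)) (r (j + t)))).trace).re
            else 0) := by
  intro x i
  set f : (Fin n → Bool) → (Fin n → Bool) → ℝ := fun z y => ((Q y * ρ z).trace).re with hf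
  have hsum : ∀ z, ∑ y, f z y = 1 := by
    intro z
    have : ((∑ y, Q y) * ρ z).trace = 1 := by rw [hQ.2, one_mul, (hρ z).2]
    rw [Finset.sum_mul, Matrix.trace_sum] at this
    have h2 := congrArg Complex.re this
    simpa [hf] using h2
  have key : (∑ t : Fin n, ∑ r : Fin n → Bool, ∑ y' : Fin n → Bool,
          (if xor (y' (i - t)) (r i) = x i
            then ((Q y' * ρ (fun j => xor (x (j + t)) (r (j + t)))).trace).re
            else 0)) = n * 2 ^ n - ∑ z, ∑ y, f z y * (hammingDist z y : ℝ) := by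
    have e1 : ∀ t : Fin n, (∑ r : Fin n → Bool, ∑ y' : Fin n → Bool,
          (if xor (y' (i - t)) (r i) = x i
            then ((Q y' * ρ (fun j => xor (x (j + t)) (r (j + t)))).trace).re
            else 0)) = ∑ z, ∑ y, if y (i - t) = z (i - t) then f z y else 0 := by
      intro t
      rw [← shift_xor_sum n x t (fun z => ∑ y, if y (i - t) = z (i - t) then f z y else 0)]
      refine Finset.sum_congr rfl fun r _ => Finset.sum_congr rfl fun y _ => ?_
      have : (xor (y (i - t)) (r i) = x i) ↔
          (y (i - t) = xor (x (i - t + t)) (r (i - t + t))) := by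
        rw [sub_add_cancel]
        cases y (i - t) <;> cases r i <;> cases x i <;> simp
      simp only [this, hf]
    rw [Finset.sum_congr rfl fun t _ => e1 t, Finset.sum_comm]
    have e2 : ∀ z : Fin n → Bool, (∑ t : Fin n, ∑ y, if y (i - t) = z (i - t) then f z y else 0)
        = n - ∑ y, f z y * (hammingDist z y : ℝ) := by
      intro z
      rw [Finset.sum_comm, Finset.sum_congr rfl fun y _ => agree_sum n i z y (f z y),
        Finset.sum_sub_distrib, ← Finset.sum_mul, hsum, one_mul]
    rw [Finset.sum_congr rfl fun z _ => e2 z, Finset.sum_sub_distrib]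
    simp [mul_comm]
  rw [key]
  have hn : (0 : ℝ) < n := by exact_mod_cast Nat.pos_of_ne_zero (NeZero.ne n)
  have h2 : (0 : ℝ) < 2 ^ n := by positivity
  rw [Real.rpow_neg (by norm_num), Real.rpow_natCast, inv_mul_le_iff₀ h2] at havg
  rw [one_div, ← div_eq_inv_mul, le_div_iff₀ (by positivity)]
  simp only [hf]
  linarith
end

section
/- Let S be a finite nonempty set with a probability distribution μ, let J be a finite nonempty index set with |J| = M, let f : J → S → [0,1] be a family of [0,1]-valued functions, and let η > 0. Then there exist a natural number k with 1 ≤ k ≤ ⌈ln(M)/(2η²)⌉ + 1 and a tuple s : {1,…,k} → S such that for every j ∈ J: (1/k)·Σ_{t=1}^{k} f(j)(s(t)) ≤ E_{s∼μ}[f(j)(s)] + η. -/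
open BigOperators

lemma hoeff_aux {S : Type*} [Fintype S]
    (μ : S → ℝ) (hμ0 : ∀ s, 0 ≤ μ s) (hμ1 : ∑ s, μ s = 1)
    (g : S → ℝ) (hg : ∀ s, 0 ≤ g s ∧ g s ≤ 1) (x : ℝ) :
    ∑ a, μ a * Real.exp (x * (g a - ∑ b, μ b * g b)) ≤ Real.exp (x ^ 2 / 8) := by
  letI : MeasurableSpace S := ⊤
  haveI : MeasurableSingletonClass S := ⟨fun _ => trivial⟩
  have hs : ∑ a, ENNReal.ofReal (μ a) = 1 := by
    rw [← ENNReal.ofReal_sum_of_nonneg (fun i _ => hμ0 i), hμ1, ENNReal.ofReal_one]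
  let p : PMF S := PMF.ofFintype (fun a => ENNReal.ofReal (μ a)) hs
  have hp : ∀ h : S → ℝ, ∫ a, h a ∂p.toMeasure = ∑ a, μ a * h a := by
    intro h
    rw [PMF.integral_eq_sum]
    refine Finset.sum_congr rfl fun a _ => ?_
    simp [p, ENNReal.toReal_ofReal (hμ0 a)]
  have h := (ProbabilityTheory.hasSubgaussianMGF_of_mem_Icc (μ := p.toMeasure) (X := g)
    (a := 0) (b := 1) (measurable_from_top.aemeasurable)
    (Filter.Eventually.of_forall fun s => ⟨(hg s).1, (hg s).2⟩)).mgf_le x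
  rw [ProbabilityTheory.mgf, hp, hp] at h
  refine h.trans (le_of_eq ?_)
  congr 1
  simp
  ring

/-- STATEMENT 13: Derandomization by sampling (Newman-style). For a finite family of
`[0,1]`-valued functions `f j : S → [0,1]` (`j` ranging over `J` with `|J| = M`), a distribution
`μ` on `S` and `η > 0`, there exist `k` with `1 ≤ k ≤ ⌈ln(M)/(2η²)⌉ + 1` and a tuple
`s : Fin k → S` such that for every `j`, the empirical average of `f j` over the tuple exceeds
the true expectation `E_{s∼μ}[f j s]` by at most `η`. -/
theorem sampling_derandomization {S : Type*} [Fintype S] [Nonempty S]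
    (μ : S → ℝ) (hμ0 : ∀ s, 0 ≤ μ s) (hμ1 : ∑ s, μ s = 1)
    {J : Type*} [Fintype J] [Nonempty J]
    (f : J → S → ℝ) (hf : ∀ j s, 0 ≤ f j s ∧ f j s ≤ 1)
    (η : ℝ) (hη : 0 < η) :
    ∃ k : ℕ, 1 ≤ k ∧ k ≤ ⌈Real.log (Fintype.card J) / (2 * η ^ 2)⌉₊ + 1 ∧
      ∃ s : Fin k → S, ∀ j : J,
        (1 / (k : ℝ)) * ∑ t, f j (s t) ≤ (∑ a, μ a * f j a) + η := by
  classical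
  refine ⟨_, Nat.le_add_left 1 _, le_rfl, ?_⟩
  have hk : Real.log (Fintype.card J) / (2 * η ^ 2)
      < ((⌈Real.log (Fintype.card J) / (2 * η ^ 2)⌉₊ + 1 : ℕ) : ℝ) := by
    push_cast
    linarith [Nat.le_ceil (Real.log (Fintype.card J) / (2 * η ^ 2))]
  have hk1 : 0 < ⌈Real.log (Fintype.card J) / (2 * η ^ 2)⌉₊ + 1 := Nat.succ_pos _
  generalize ⌈Real.log (Fintype.card J) / (2 * η ^ 2)⌉₊ + 1 = k at hk hk1
  have hkR : (0 : ℝ) < k := by exact_mod_cast hk1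
  rw [div_lt_iff₀ (by positivity)] at hk
  by_contra! hcon
  have hprod : ∀ h : S → ℝ, ∑ s : Fin k → S, ∏ t, h (s t) = (∑ a, h a) ^ k := by
    intro h
    rw [← Fintype.piFinset_univ, ← Finset.prod_univ_sum]
    simp
  have hw0 : ∀ s : Fin k → S, 0 ≤ ∏ t, μ (s t) := fun s => Finset.prod_nonneg fun t _ => hμ0 _
  have lower : Real.exp (4 * η ^ 2 * k) ≤ ∑ s : Fin k → S, (∏ t, μ (s t)) *
      ∑ j, Real.exp (4 * η * ∑ t, (f j (s t) - ∑ a, μ a * f j a)) := by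
    calc Real.exp (4 * η ^ 2 * k)
        = ∑ s : Fin k → S, (∏ t, μ (s t)) * Real.exp (4 * η ^ 2 * k) := by
          rw [← Finset.sum_mul, hprod, hμ1]; simp
      _ ≤ _ := by
          refine Finset.sum_le_sum fun s _ => mul_le_mul_of_nonneg_left ?_ (hw0 s)
          obtain ⟨j, hj⟩ := hcon s
          refine le_trans ?_ (Finset.single_le_sum
            (f := fun j => Real.exp (4 * η * ∑ t, (f j (s t) - ∑ a, μ a * f j a)))
            (fun i _ => (Real.exp_pos _).le) (Finset.mem_univ j))
          apply Real.exp_le_exp.2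
          rw [Finset.sum_sub_distrib]
          simp only [Finset.sum_const, Finset.card_univ, Fintype.card_fin, nsmul_eq_mul]
          rw [one_div, inv_mul_eq_div, lt_div_iff₀ hkR] at hj
          have := mul_le_mul_of_nonneg_left hj.le (by positivity : 0 ≤ 4 * η)
          linarith
  have upper : ∑ s : Fin k → S, (∏ t, μ (s t)) *
      ∑ j, Real.exp (4 * η * ∑ t, (f j (s t) - ∑ a, μ a * f j a))
      ≤ Fintype.card J * Real.exp (2 * η ^ 2 * k) := by
    simp_rw [Finset.mul_sum, Real.exp_sum, ← Finset.prod_mul_distrib]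
    rw [Finset.sum_comm]
    have : ∀ j ∈ (Finset.univ : Finset J), ∑ s : Fin k → S,
        ∏ t, μ (s t) * Real.exp (4 * η * (f j (s t) - ∑ a, μ a * f j a))
        ≤ Real.exp (2 * η ^ 2 * k) := by
      intro j _
      rw [hprod (fun a => μ a * Real.exp (4 * η * (f j a - ∑ a, μ a * f j a)))]
      refine (pow_le_pow_left₀ (Finset.sum_nonneg fun a _ =>
        mul_nonneg (hμ0 a) (Real.exp_pos _).le) (hoeff_aux μ hμ0 hμ1 (f j) (hf j) _) k).trans ?_
      rw [← Real.exp_nat_mul]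
      apply Real.exp_le_exp.2
      apply le_of_eq; ring
    simpa using Finset.sum_le_sum this
  have hM : (0 : ℝ) < Fintype.card J := by exact_mod_cast Fintype.card_pos
  have h := lower.trans upper
  nth_rewrite 1 [← Real.exp_log hM] at h
  rw [← Real.exp_add, Real.exp_le_exp] at h
  linarith
end

section
/- Let X and Y be finite nonempty sets and E : X → (probability distributions on Y) a classical channel. Then the max channel capacity C_max(E), defined as the maximum over probability distributions P on X of the max-information I_max(X : Y) of the joint distribution (x,y) ↦ P(x)·E(x)(y), equals inf over probability distributions σ on Y of max_{x∈X} D_max(E(x) ‖ σ) (with values in the extended reals). -/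
open BigOperators

/-- Max-relative entropy `D_max(P‖Q) = inf{λ ∈ ℝ : P(a) ≤ 2^λ·Q(a) for all a}`, as an extended
real (`+∞` when no such `λ` exists, e.g. when the support of `P` is not contained in that of
`Q`). -/
noncomputable def Dmax {α : Type*} [Fintype α] (P Q : α → ℝ) : EReal :=
  sInf ((fun l : ℝ => (l : EReal)) '' {l : ℝ | ∀ a, P a ≤ 2 ^ l * Q a})

/-- STATEMENT 15: The max channel capacity of a classical channel `E : X → P(Y)`, i.e. the
supremum over input distributions `P` of the max-information
`I_max(X:Y) = inf_σ D_max(R ‖ R_X ⊗ σ)` of the joint distribution `R(x,y) = P(x)·E(x)(y)`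
(with `R_X` its marginal on `X`), equals `inf_σ max_{x∈X} D_max(E(x)‖σ)` in the extended
reals. -/
theorem max_channel_capacity_formula {X Y : Type*} [Fintype X] [Nonempty X]
    [Fintype Y] [Nonempty Y]
    (E : X → Y → ℝ) (hE : ∀ x, (∀ y, 0 ≤ E x y) ∧ ∑ y, E x y = 1) :
    (⨆ P : {P : X → ℝ // (∀ x, 0 ≤ P x) ∧ ∑ x, P x = 1},
        ⨅ σ : {σ : Y → ℝ // (∀ y, 0 ≤ σ y) ∧ ∑ y, σ y = 1},
          Dmax (fun q : X × Y => P.1 q.1 * E q.1 q.2)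
            (fun q : X × Y => (∑ y, P.1 q.1 * E q.1 y) * σ.1 q.2))
      = ⨅ σ : {σ : Y → ℝ // (∀ y, 0 ≤ σ y) ∧ ∑ y, σ y = 1},
          ⨆ x : X, Dmax (E x) σ.1 := by
  have hsum : ∀ (P : X → ℝ) (x : X), ∑ y, P x * E x y = P x := by
    intro P x
    rw [← Finset.mul_sum, (hE x).2, mul_one]
  apply le_antisymm
  · refine iSup_le fun P => iInf_mono fun σ => ?_
    refine le_of_forall_gt fun c hc => ?_
    obtain ⟨r, hr1, hr2⟩ := EReal.lt_iff_exists_real_btwn.1 hc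
    refine lt_of_le_of_lt (sInf_le ⟨r, ?_, rfl⟩) hr2
    rintro ⟨x, y⟩
    have hx : Dmax (E x) σ.1 < (r : EReal) :=
      lt_of_le_of_lt (le_iSup (fun x => Dmax (E x) σ.1) x) hr1
    obtain ⟨_, ⟨l, hl, rfl⟩, hlr⟩ := sInf_lt_iff.1 hx
    have hlr' : l < r := EReal.coe_lt_coe_iff.1 hlr
    have h1 : E x y ≤ 2 ^ r * σ.1 y :=
      (hl y).trans (mul_le_mul_of_nonneg_right
        (Real.rpow_le_rpow_of_exponent_le (by norm_num) hlr'.le) (σ.2.1 y))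
    have h2 := mul_le_mul_of_nonneg_left h1 (P.2.1 x)
    simp only [hsum]
    linarith
  · have hc : (0 : ℝ) < Fintype.card X := by exact_mod_cast Fintype.card_pos
    refine le_iSup_of_le ⟨fun _ => (Fintype.card X : ℝ)⁻¹, fun _ => by positivity, ?_⟩ ?_
    · simp [hc.ne']
    · refine iInf_mono fun σ => iSup_le fun x => sInf_le_sInf (Set.image_mono ?_)
      intro l hl y
      have h := hl (x, y)
      simp only [← Finset.mul_sum, (hE x).2, mul_one] at h
      have hi : (0 : ℝ) < (Fintype.card X : ℝ)⁻¹ := by positivity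
      refine le_of_mul_le_mul_left ?_ hi
      linarith
end
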